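/- arXiv:0810.0183 — 3 statements merged into one kernel-verified Lean document; each statement's English description precedes it below -/
import Mathlib

section
/- Let (f₁,g₁) and (f₂,g₂) be invertible pairs in the real disc algebra A_ℝ(D). Then (f₁,g₁) and (f₂,g₂) are simultaneously stabilizable (i.e., there exist α, β ∈ A_ℝ(D) such that αf₁ + βg₁ and αf₂ + βg₂ are both units of A_ℝ(D)) if and only if the two pairs are sign-linked. -/
open Complex Metric ComplexConjugate

/-- The real disc algebra `A_ℝ(D)`: functions continuous on the closed unit disc,
holomorphic on the open unit disc, satisfying `f z = conj (f (conj z))` on the closed disc. -/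
def IsRDisc (f : ℂ → ℂ) : Prop :=
  ContinuousOn f (closedBall (0 : ℂ) 1) ∧
  DifferentiableOn ℂ f (ball (0 : ℂ) 1) ∧
  ∀ z ∈ closedBall (0 : ℂ) 1, f z = conj (f (conj z))

/-- A unit of `A_ℝ(D)`: a member of the algebra with no zeros on the closed unit disc. -/
def IsRDiscUnit (f : ℂ → ℂ) : Prop :=
  IsRDisc f ∧ ∀ z ∈ closedBall (0 : ℂ) 1, f z ≠ 0

/-- The pair `(f, g)` is invertible in `A_ℝ(D)`: there are `α, β` in the algebra with
`α f + β g = 1` on the closed unit disc. -/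
def BezoutPair (f g : ℂ → ℂ) : Prop :=
  ∃ α β : ℂ → ℂ, IsRDisc α ∧ IsRDisc β ∧
    ∀ z ∈ closedBall (0 : ℂ) 1, α z * f z + β z * g z = 1

/-- The pairs `(f₁,g₁)` and `(f₂,g₂)` are sign-linked. -/
def SignLinked (f₁ g₁ f₂ g₂ : ℂ → ℂ) : Prop :=
  ∀ x y : ℝ, x ∈ Set.Icc (-1 : ℝ) 1 → y ∈ Set.Icc (-1 : ℝ) 1 →
    f₁ (x : ℂ) * g₂ (x : ℂ) - f₂ (x : ℂ) * g₁ (x : ℂ) = 0 →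
    f₁ (y : ℂ) * g₂ (y : ℂ) - f₂ (y : ℂ) * g₁ (y : ℂ) = 0 →
    ∀ lam mu : ℝ,
      f₂ (x : ℂ) = (lam : ℂ) * f₁ (x : ℂ) → g₂ (x : ℂ) = (lam : ℂ) * g₁ (x : ℂ) →
      f₂ (y : ℂ) = (mu : ℂ) * f₁ (y : ℂ) → g₂ (y : ℂ) = (mu : ℂ) * g₁ (y : ℂ) →
      0 < lam * mu

/-- `f` has constant sign on the real zeros of `g`: the (real) values `f x` over
`x ∈ [-1,1]` with `g x = 0` are either all positive or all negative. -/
def ConstSignOnRealZeros (f g : ℂ → ℂ) : Prop :=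
  (∀ x ∈ Set.Icc (-1 : ℝ) 1, g (x : ℂ) = 0 → 0 < (f (x : ℂ)).re) ∨
  (∀ x ∈ Set.Icc (-1 : ℝ) 1, g (x : ℂ) = 0 → (f (x : ℂ)).re < 0)

/-!
If `a f₁ + b g₁ = 1`, simultaneous stabilizability means that `F = a f₂ + b g₂` becomes a unit after
adding a multiple of the determinant `Δ = f₁ g₂ - f₂ g₁`; at a real zero of `Δ` the ratio of the two
pairs is the value of `F`. So one has to show, for coprime `F` and `G`, that `F + H G` is a unit for
some `H` as soon as `F` is positive at the zeros of `G` in `[-1, 1]`.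

Adding a multiple of `G²` makes `F` positive on all of `[-1, 1]`. As the units form an open set,
existence of `H` does not change under small perturbations of `F`, so `F` may be taken to be a real
polynomial without real zeros on the disc. Existence of `H` is moreover multiplicative in `F`, which
leaves the factors `(X - c) (X - conj c)` with `G c ≠ 0`. Move `c` inside the closed disc, avoiding
the zeros of `G`, to a point of the circle, and then slightly outside the disc: the factor becomes a
unit, and on the way existence of `H` never changed.
-/

open scoped Topology

section ReduciblePairs

variable {R : Type*} [CommRing R] {f f' g : R}

/-- The pair `(f, g)` is reducible: some `f + h g` is a unit (the notion behind Bass stable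
rank one). Equivalently, the residue class of `f` modulo `g` lifts to a unit. -/
def IsReduciblePair (f g : R) : Prop :=
  ∃ h, IsUnit (f + h * g)

namespace IsReduciblePair

theorem of_isUnit (hf : IsUnit f) (g : R) : IsReduciblePair f g :=
  ⟨0, by simpa using hf⟩

theorem neg (h : IsReduciblePair f g) : IsReduciblePair (-f) g := by
  obtain ⟨k, hk⟩ := h
  exact ⟨-k, by simpa [add_comm] using hk.neg⟩

theorem mul (h : IsReduciblePair f g) (h' : IsReduciblePair f' g) :
    IsReduciblePair (f * f') g := by
  obtain ⟨k, hk⟩ := h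
  obtain ⟨k', hk'⟩ := h'
  refine ⟨k * f' + f * k' + k * k' * g, ?_⟩
  convert hk.mul hk' using 1
  ring

end IsReduciblePair

theorem isReduciblePair_add_mul_right_iff {k : R} :
    IsReduciblePair (f + k * g) g ↔ IsReduciblePair f g := by
  refine ⟨fun ⟨l, hl⟩ ↦ ⟨k + l, ?_⟩, fun ⟨l, hl⟩ ↦ ⟨l - k, ?_⟩⟩ <;> convert hl using 1 <;> ring

theorem isReduciblePair_mul_isUnit_iff {u : R} (hu : IsUnit u) :
    IsReduciblePair (f * u) g ↔ IsReduciblePair f g := by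
  obtain ⟨u, rfl⟩ := hu
  refine ⟨fun ⟨k, hk⟩ ↦ ⟨k * ↑u⁻¹, ?_⟩, fun h ↦ h.mul (.of_isUnit u.isUnit g)⟩
  convert hk.mul u⁻¹.isUnit using 1
  linear_combination (-f) * u.mul_inv

/-- All solutions of the first Bézout equation are `(a - h g₁, b + h f₁)`, and the second
combination then equals `a f₂ + b g₂ + h (f₁ g₂ - f₂ g₁)`. -/
theorem exists_isUnit_and_isUnit_iff_isReduciblePair {f₁ g₁ f₂ g₂ a b : R}
    (h : a * f₁ + b * g₁ = 1) :
    (∃ α β, IsUnit (α * f₁ + β * g₁) ∧ IsUnit (α * f₂ + β * g₂)) ↔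
      IsReduciblePair (a * f₂ + b * g₂) (f₁ * g₂ - f₂ * g₁) := by
  constructor
  · rintro ⟨α, β, ⟨u, hu⟩, hv⟩
    refine (isReduciblePair_mul_isUnit_iff u.isUnit).1 ⟨a * β - b * α, ?_⟩
    convert hv using 1
    linear_combination (α * f₂ + β * g₂) * h + (a * f₂ + b * g₂) * hu
  · rintro ⟨k, hk⟩
    refine ⟨a - k * g₁, b + k * f₁, ?_, ?_⟩
    · convert isUnit_one using 1
      linear_combination h
    · convert hk using 1
      ring

theorem isCoprime_bezout_comb_det {f₁ g₁ f₂ g₂ a b : R} (h : a * f₁ + b * g₁ = 1)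
    (h₂ : IsCoprime f₂ g₂) : IsCoprime (a * f₂ + b * g₂) (f₁ * g₂ - f₂ * g₁) := by
  obtain ⟨s, t, hst⟩ := h₂
  exact ⟨s * f₁ + t * g₁, t * a - s * b, by linear_combination hst + (s * f₂ + t * g₂) * h⟩

theorem eq_mul_and_eq_mul_iff_of_bezout {f₁ g₁ f₂ g₂ a b c : R}
    (h : a * f₁ + b * g₁ = 1) (hdet : f₁ * g₂ - f₂ * g₁ = 0) :
    f₂ = c * f₁ ∧ g₂ = c * g₁ ↔ a * f₂ + b * g₂ = c := by
  constructor
  · rintro ⟨rfl, rfl⟩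
    linear_combination c * h
  · rintro rfl
    exact ⟨by linear_combination -f₂ * h - b * hdet, by linear_combination -g₂ * h + a * hdet⟩

end ReduciblePairs

section OpenUnits

variable {R : Type*} [CommRing R] [TopologicalSpace R] [IsTopologicalRing R] {f g : R}

theorem eventually_isCoprime (hR : IsOpen {u : R | IsUnit u}) (h : IsCoprime f g) :
    ∀ᶠ f' in 𝓝 f, IsCoprime f' g := by
  obtain ⟨s, t, hst⟩ := h
  have hcont : ContinuousAt (fun f' ↦ s * f' + t * g) f := by fun_prop
  filter_upwards [hcont (hR.mem_nhds (by simp [hst]))] with f' hf'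
  obtain ⟨u, hu⟩ := hf'
  refine ⟨↑u⁻¹ * s, ↑u⁻¹ * t, ?_⟩
  linear_combination (↑u⁻¹ : R) * hu.symm + u.inv_mul

/-- Modulo `g`, the element `f` is invertible and `f'` is `f` times the unit `1 + s (f' - f)`,
where `s` is an inverse of `f` modulo `g`. -/
theorem eventually_isReduciblePair_iff (hR : IsOpen {u : R | IsUnit u}) (h : IsCoprime f g) :
    ∀ᶠ f' in 𝓝 f, (IsReduciblePair f' g ↔ IsReduciblePair f g) := by
  obtain ⟨s, t, hst⟩ := h
  have hcont : ContinuousAt (fun f' ↦ 1 + s * (f' - f)) f := by fun_prop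
  filter_upwards [hcont (hR.mem_nhds (by simp))] with f' (hunit : IsUnit (1 + s * (f' - f)))
  have hf' : f * (1 + s * (f' - f)) + (f' - f) * t * g = f' := by
    linear_combination (f' - f) * hst
  rw [← isReduciblePair_mul_isUnit_iff (f := f) hunit,
    ← isReduciblePair_add_mul_right_iff (f := f * _) (k := (f' - f) * t), hf']

theorem isReduciblePair_iff_of_isPreconnected {X : Type*} [TopologicalSpace X]
    (hR : IsOpen {u : R | IsUnit u}) {S : Set X} (hS : IsPreconnected S) {q : X → R}
    (hq : ContinuousOn q S) (hcop : ∀ x ∈ S, IsCoprime (q x) g) {x y : X} (hx : x ∈ S)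
    (hy : y ∈ S) : IsReduciblePair (q x) g ↔ IsReduciblePair (q y) g := by
  refine hS.induction₂' (fun x y ↦ IsReduciblePair (q x) g ↔ IsReduciblePair (q y) g)
    (fun x hx ↦ ?_) (fun _ _ _ _ _ _ ↦ Iff.trans) hx hy
  filter_upwards [(hq x hx).eventually (eventually_isReduciblePair_iff hR (hcop x hx))] with y h
  exact ⟨h.symm, h⟩

end OpenUnits

theorem forall_mul_pos_iff_forall_pos_or_forall_neg {X R : Type*} [Ring R] [LinearOrder R]
    [IsStrictOrderedRing R] {f : X → R} {S : Set X} :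
    (∀ x ∈ S, ∀ y ∈ S, 0 < f x * f y) ↔ (∀ x ∈ S, 0 < f x) ∨ ∀ x ∈ S, f x < 0 := by
  constructor
  · intro h
    by_contra! hcon
    obtain ⟨⟨x, hx, hfx⟩, y, hy, hfy⟩ := hcon
    exact (h x hx y hy).not_ge (mul_nonpos_of_nonpos_of_nonneg hfx hfy)
  · rintro (h | h) x hx y hy
    · exact mul_pos (h x hx) (h y hy)
    · exact mul_pos_of_neg_of_neg (h x hx) (h y hy)

section Compact

variable {X : Type*} [TopologicalSpace X]

theorem exists_forall_add_mul_pos [CompactSpace X] {f g : X → ℝ} (hf : Continuous f)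
    (hg : Continuous g) (hg₀ : 0 ≤ g) (h : ∀ x, g x = 0 → 0 < f x) :
    ∃ M : ℝ, ∀ x, 0 < f x + M * g x := by
  have hmono : Monotone fun M : ℝ ↦ {x | 0 < f x + M * g x} := fun M N hMN x hx ↦ by
    have := mul_le_mul_of_nonneg_right hMN (hg₀ x)
    simp only [Set.mem_ofPred_eq] at hx ⊢
    linarith
  have hcover : Set.univ ⊆ ⋃ M : ℝ, {x | 0 < f x + M * g x} := fun x _ ↦ by
    refine Set.mem_iUnion.2 ?_
    rcases eq_or_ne (g x) 0 with h₀ | h₀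
    · exact ⟨0, by simpa using h x h₀⟩
    · exact ⟨(1 - f x) / g x, by simp [h₀]⟩
  obtain ⟨M, hM⟩ := isCompact_univ.elim_directed_cover _
    (fun M ↦ isOpen_lt continuous_const (by fun_prop)) hcover hmono.directed_le
  exact ⟨M, fun x ↦ hM (Set.mem_univ x)⟩

theorem forall_pos_or_forall_neg_of_forall_ne_zero [PreconnectedSpace X] {f : X → ℝ}
    (hf : Continuous f) (h : ∀ x, f x ≠ 0) : (∀ x, 0 < f x) ∨ ∀ x, f x < 0 := by
  by_contra! hcon
  obtain ⟨⟨x, hx⟩, y, hy⟩ := hcon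
  obtain ⟨z, hz⟩ := mem_range_of_exists_le_of_exists_ge hf ⟨x, hx⟩ ⟨y, hy⟩
  exact h z hz

end Compact

theorem isPreconnected_ball_diff_of_countable {E : Type*} [NormedAddCommGroup E] [NormedSpace ℝ E]
    (hE : 1 < Module.rank ℝ E) {s : Set E} (hs : s.Countable) (c : E) (r : ℝ) :
    IsPreconnected (ball c r \ s) := by
  rcases le_or_gt r 0 with hr | hr
  · simpa [ball_eq_empty.2 hr] using isPreconnected_empty
  let φ := OpenPartialHomeomorph.univBall c r
  have hinj : Set.InjOn φ Set.univ := by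
    simpa [φ] using φ.injOn
  have himage : φ '' (φ ⁻¹' s)ᶜ = ball c r \ s := by
    rw [← Set.preimage_compl, Set.image_preimage_eq_inter_range, ← Set.image_univ,
      ← OpenPartialHomeomorph.univBall_source c r, φ.image_source_eq_target,
      OpenPartialHomeomorph.univBall_target c hr, Set.inter_comm, Set.sdiff_eq]
  rw [← himage]
  exact ((hs.preimage_of_injOn (hinj.mono (Set.subset_univ _))).isConnected_compl_of_one_lt_rank
    hE).isPreconnected.image φ (OpenPartialHomeomorph.continuous_univBall c r).continuousOn

theorem countable_inter_preimage_zero_of_analyticOnNhd {𝕜 E : Type*}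
    [NontriviallyNormedField 𝕜] [HereditarilyLindelofSpace 𝕜] [NormedAddCommGroup E]
    [NormedSpace 𝕜 E] {g : 𝕜 → E} {U : Set 𝕜} (hg : AnalyticOnNhd 𝕜 g U)
    (hU : IsPreconnected U) (hne : ∃ z ∈ U, g z ≠ 0) : (U ∩ g ⁻¹' {0}).Countable := by
  have hcodisc : (g ⁻¹' {0})ᶜ ∈ Filter.codiscreteWithin U :=
    (hg.eqOn_zero_or_eventually_ne_zero_of_preconnected hU).resolve_left fun h ↦
      let ⟨z, hz, hgz⟩ := hne; hgz (h hz)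
  have hdisc : IsDiscrete (g ⁻¹' {0} ∩ U) := isDiscrete_of_codiscreteWithin hcodisc
  rw [Set.inter_comm]
  exact (HereditarilyLindelofSpace.isLindelof _).countable_of_isDiscrete hdisc

section Polynomials

open Polynomial

theorem exists_polynomial_near_of_differentiableOn_ball {f : ℂ → ℂ} {r R : ℝ}
    (hf : DifferentiableOn ℂ f (ball 0 R)) (hrR : r < R) {ε : ℝ} (hε : 0 < ε) :
    ∃ p : ℂ[X], ∀ z ∈ closedBall (0 : ℂ) r, ‖f z - p.eval z‖ < ε := by
  rcases lt_or_ge r 0 with hr | hr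
  · exact ⟨0, by simp [closedBall_eq_empty.2 hr]⟩
  obtain ⟨a, hra, haR⟩ := exists_between hrR
  obtain ⟨b, hba, hbR⟩ := exists_between haR
  lift a to NNReal using hr.trans hra.le
  lift b to NNReal using a.2.trans hba.le
  have hseries := (hf.mono (closedBall_subset_ball hbR)).hasFPowerSeriesOnBall (a.2.trans_lt hba)
  obtain ⟨n, hn⟩ := (Metric.tendstoUniformlyOn_iff.1
    (hseries.tendstoUniformlyOn (ENNReal.coe_lt_coe.2 hba)) ε hε).exists
  refine ⟨∑ k ∈ Finset.range n, C ((cauchyPowerSeries f 0 b).coeff k) * X ^ k, fun z hz ↦ ?_⟩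
  have heval : (∑ k ∈ Finset.range n, C ((cauchyPowerSeries f 0 b).coeff k) * X ^ k).eval z =
      (cauchyPowerSeries f 0 b).partialSum n z := by
    simp only [FormalMultilinearSeries.partialSum, eval_finsetSum, eval_mul, eval_C, eval_pow,
      eval_X, FormalMultilinearSeries.apply_eq_pow_smul_coeff, smul_eq_mul, mul_comm]
  rw [heval, ← dist_eq_norm]
  simpa only [zero_add] using hn z (closedBall_subset_ball hra hz)

theorem exists_forall_norm_sub_dilation_lt {E F : Type*} [NormedAddCommGroup E]
    [NormedSpace ℝ E] [ProperSpace E] [SeminormedAddCommGroup F] {f : E → F} {R : ℝ}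
    (hf : ContinuousOn f (closedBall 0 R)) {ε : ℝ} (hε : 0 < ε) :
    ∃ r ∈ Set.Ioo (0 : ℝ) 1, ∀ z ∈ closedBall (0 : E) R, ‖f z - f (r • z)‖ < ε := by
  obtain ⟨δ, hδ, hfδ⟩ := Metric.uniformContinuousOn_iff.1
    ((isCompact_closedBall 0 R).uniformContinuousOn_of_continuous hf) ε hε
  have hlim : ∀ᶠ r in 𝓝[<] (1 : ℝ), (1 - r) * R < δ := by
    have : ContinuousAt (fun r : ℝ ↦ (1 - r) * R) 1 := by fun_prop
    exact (this.eventually_lt continuousAt_const (by simpa)).filter_mono nhdsWithin_le_nhds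
  obtain ⟨r, hrδ, hr⟩ := (hlim.and (Ioo_mem_nhdsLT zero_lt_one)).exists
  refine ⟨r, hr, fun z hz ↦ ?_⟩
  rw [← dist_eq_norm]
  refine hfδ z hz _ ?_ ?_
  · rw [mem_closedBall_zero_iff] at hz ⊢
    rw [norm_smul, Real.norm_of_nonneg hr.1.le]
    exact (mul_le_of_le_one_left (norm_nonneg z) hr.2.le).trans hz
  · rw [mem_closedBall_zero_iff] at hz
    calc dist z (r • z) = ‖(1 - r) • z‖ := by rw [dist_eq_norm, sub_smul, one_smul]
      _ = (1 - r) * ‖z‖ := by rw [norm_smul, Real.norm_of_nonneg (sub_nonneg.2 hr.2.le)]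
      _ ≤ (1 - r) * R := mul_le_mul_of_nonneg_left hz (sub_nonneg.2 hr.2.le)
      _ < δ := hrδ

theorem exists_polynomial_near_of_continuousOn_closedBall {f : ℂ → ℂ} {R : ℝ}
    (hc : ContinuousOn f (closedBall 0 R)) (hd : DifferentiableOn ℂ f (ball 0 R)) {ε : ℝ}
    (hε : 0 < ε) : ∃ p : ℂ[X], ∀ z ∈ closedBall (0 : ℂ) R, ‖f z - p.eval z‖ < ε := by
  rcases le_or_gt R 0 with hR | hR
  · refine ⟨C (f 0), fun z hz ↦ ?_⟩
    obtain rfl : z = 0 := norm_le_zero_iff.1 ((mem_closedBall_zero_iff.1 hz).trans hR)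
    simpa using hε
  obtain ⟨r, hr, hfr⟩ := exists_forall_norm_sub_dilation_lt hc (half_pos hε)
  obtain ⟨p, hp⟩ := exists_polynomial_near_of_differentiableOn_ball hd
    (mul_lt_of_lt_one_left hR hr.2) (half_pos hε)
  refine ⟨p.comp (C (r : ℂ) * X), fun z hz ↦ ?_⟩
  have hrz : r • z ∈ closedBall (0 : ℂ) (r * R) := by
    rw [mem_closedBall_zero_iff] at hz ⊢
    rw [norm_smul, Real.norm_of_nonneg hr.1.le]
    exact mul_le_mul_of_nonneg_left hz hr.1.le
  calc ‖f z - (p.comp (C (r : ℂ) * X)).eval z‖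
      = ‖(f z - f (r • z)) + (f (r • z) - p.eval (r • z))‖ := by simp
    _ ≤ ‖f z - f (r • z)‖ + ‖f (r • z) - p.eval (r • z)‖ := norm_add_le _ _
    _ < ε := by linarith [hfr z hz, hp _ hrz]

theorem exists_real_polynomial_aeval_eq_symmetrization (p : ℂ[X]) :
    ∃ q : ℝ[X], ∀ z : ℂ, aeval z q = (p.eval z + conj (p.eval (conj z))) / 2 := by
  induction p using Polynomial.induction_on' with
  | add p₁ p₂ h₁ h₂ =>
    obtain ⟨q₁, hq₁⟩ := h₁
    obtain ⟨q₂, hq₂⟩ := h₂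
    refine ⟨q₁ + q₂, fun z ↦ ?_⟩
    simp only [map_add, hq₁, hq₂, eval_add]
    ring
  | monomial n a =>
    refine ⟨monomial n a.re, fun z ↦ ?_⟩
    simp only [aeval_monomial, eval_monomial, map_mul, map_pow, conj_conj, coe_algebraMap]
    rw [← add_mul, add_conj, ofReal_mul, ofReal_ofNat]
    ring

/-- The real quadratic `(X - c) (X - conj c)`; it is `(X - c)²` when `c` is real. -/
noncomputable def conjQuadratic (c : ℂ) : ℝ[X] :=
  X ^ 2 - C (2 * c.re) * X + C (‖c‖ ^ 2)

theorem natDegree_conjQuadratic (c : ℂ) : (conjQuadratic c).natDegree = 2 := by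
  rw [conjQuadratic]
  compute_degree!

theorem map_conjQuadratic (c : ℂ) :
    (conjQuadratic c).map (algebraMap ℝ ℂ) = (X - C c) * (X - C (conj c)) := by
  have hadd : (C c + C (conj c) : ℂ[X]) = C (2 * (c.re : ℂ)) := by
    rw [← C_add, add_conj, ofReal_mul, ofReal_ofNat]
  have hmul : (C c * C (conj c) : ℂ[X]) = C ((‖c‖ : ℂ) ^ 2) := by
    rw [← C_mul, mul_conj']
  simp only [conjQuadratic, Polynomial.map_add, Polynomial.map_sub, Polynomial.map_mul,
    Polynomial.map_pow, map_X, map_C, coe_algebraMap, ofReal_mul, ofReal_pow, ofReal_ofNat]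
  linear_combination X * hadd - hmul

theorem aeval_conjQuadratic (c z : ℂ) :
    aeval z (conjQuadratic c) = (z - c) * (z - conj c) := by
  rw [aeval_def, ← eval_map, map_conjQuadratic]
  simp

/-- Over `ℂ`, `X - c` divides `p - p(c)` and `X - conj c` divides `p - p(conj c)`. -/
theorem conjQuadratic_dvd_comp (c : ℂ) (p : ℝ[X]) :
    conjQuadratic c ∣ (conjQuadratic (aeval c p)).comp p := by
  rw [← map_dvd_map' (algebraMap ℝ ℂ), Polynomial.map_comp, map_conjQuadratic, map_conjQuadratic,
    ← aeval_conj, ← eval_map_algebraMap, ← eval_map_algebraMap]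
  simp only [mul_comp, sub_comp, X_comp, C_comp]
  exact mul_dvd_mul X_sub_C_dvd_sub_C_eval X_sub_C_dvd_sub_C_eval

end Polynomials

theorem exists_mem_frontier_ne_zero {E F : Type*} [NormedAddCommGroup E] [NormedSpace ℂ E]
    [Nontrivial E] [NormedAddCommGroup F] [NormedSpace ℂ F] {f : E → F} {U : Set E}
    (hU : Bornology.IsBounded U) (hf : DiffContOnCl ℂ f U) (hne : ∃ z ∈ U, f z ≠ 0) :
    ∃ w ∈ frontier U, f w ≠ 0 := by
  by_contra! hcon
  obtain ⟨z, hz, hfz⟩ := hne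
  exact hfz (eqOn_of_eqOn_frontier hU hf diffContOnCl_const (g := fun _ ↦ 0) hcon hz)

theorem isPreconnected_closedBall_inter_ne_zero {F : Type*} [NormedAddCommGroup F]
    [NormedSpace ℂ F] [CompleteSpace F] {f : ℂ → F} {c : ℂ} {r : ℝ} (hr : r ≠ 0)
    (hf : DiffContOnCl ℂ f (ball c r)) (hne : ∃ z ∈ ball c r, f z ≠ 0) :
    IsPreconnected (closedBall c r ∩ {z | f z ≠ 0}) := by
  have hcount := countable_inter_preimage_zero_of_analyticOnNhd (hf.1.analyticOnNhd isOpen_ball)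
    (convex_ball c r).isPreconnected hne
  have hconn := isPreconnected_ball_diff_of_countable
    (by rw [rank_real_complex]; norm_num) hcount c r
  refine hconn.subset_closure (fun z hz ↦ ⟨ball_subset_closedBall hz.1, fun h ↦ hz.2 ⟨hz.1, h⟩⟩) ?_
  rintro z ⟨hz, hfz⟩
  have hnear : ∀ᶠ w in 𝓝[closedBall c r] z, f w ≠ 0 :=
    (hf.continuousOn_ball z hz).eventually_ne hfz
  have hball : ∃ᶠ w in 𝓝 z, w ∈ ball c r :=
    mem_closure_iff_frequently.1 (by rwa [closure_ball c hr])
  refine mem_closure_iff_frequently.2 ((hball.and_eventually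
    (eventually_nhdsWithin_iff.1 hnear)).mono fun w hw ↦ ⟨hw.1, fun h ↦ ?_⟩)
  exact hw.2 (ball_subset_closedBall hw.1) h.2

namespace IsRDisc

variable {f g : ℂ → ℂ}

theorem add (hf : IsRDisc f) (hg : IsRDisc g) : IsRDisc fun z ↦ f z + g z :=
  ⟨hf.1.add hg.1, hf.2.1.add hg.2.1, fun z hz ↦ by rw [map_add, ← hf.2.2 z hz, ← hg.2.2 z hz]⟩

theorem sub (hf : IsRDisc f) (hg : IsRDisc g) : IsRDisc fun z ↦ f z - g z :=
  ⟨hf.1.sub hg.1, hf.2.1.sub hg.2.1, fun z hz ↦ by rw [map_sub, ← hf.2.2 z hz, ← hg.2.2 z hz]⟩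

theorem mul (hf : IsRDisc f) (hg : IsRDisc g) : IsRDisc fun z ↦ f z * g z :=
  ⟨hf.1.mul hg.1, hf.2.1.mul hg.2.1, fun z hz ↦ by rw [map_mul, ← hf.2.2 z hz, ← hg.2.2 z hz]⟩

theorem const (c : ℝ) : IsRDisc fun _ ↦ (c : ℂ) :=
  ⟨continuousOn_const, differentiableOn_const _, fun _ _ ↦ (conj_ofReal c).symm⟩

theorem id : IsRDisc fun z ↦ z :=
  ⟨continuousOn_id, differentiableOn_id, fun z _ ↦ (conj_conj z).symm⟩

theorem inv (hf : IsRDisc f) (h₀ : ∀ z ∈ closedBall (0 : ℂ) 1, f z ≠ 0) :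
    IsRDisc fun z ↦ (f z)⁻¹ :=
  ⟨hf.1.inv₀ h₀, hf.2.1.fun_inv fun z hz ↦ h₀ z (ball_subset_closedBall hz),
    fun z hz ↦ by rw [map_inv₀, ← hf.2.2 z hz]⟩

theorem diffContOnCl (hf : IsRDisc f) : DiffContOnCl ℂ f (ball 0 1) :=
  .mk_ball hf.2.1 hf.1

end IsRDisc

/-- The algebra `A_ℝ(D)` as a subalgebra of the Banach algebra of continuous functions on the
closed disc. Unlike the functions satisfying `IsRDisc`, its elements carry no values off the disc,
so that its units are exactly the elements without zeros. -/
noncomputable def realDiscAlgebra : Subalgebra ℝ C(closedBall (0 : ℂ) 1, ℂ) where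
  carrier := {F | ∃ f, IsRDisc f ∧ ∀ z, F z = f z}
  mul_mem' := by
    rintro F G ⟨f, hf, hF⟩ ⟨g, hg, hG⟩
    exact ⟨_, hf.mul hg, fun z ↦ by rw [ContinuousMap.mul_apply, hF, hG]⟩
  add_mem' := by
    rintro F G ⟨f, hf, hF⟩ ⟨g, hg, hG⟩
    exact ⟨_, hf.add hg, fun z ↦ by rw [ContinuousMap.add_apply, hF, hG]⟩
  algebraMap_mem' c := ⟨_, .const c, fun _ ↦ rfl⟩

/-- The element of `A_ℝ(D)` obtained by restricting a function to the closed disc. -/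
noncomputable def IsRDisc.toRealDiscAlgebra {f : ℂ → ℂ} (hf : IsRDisc f) : realDiscAlgebra :=
  ⟨⟨_, hf.1.domRestrict⟩, f, hf, fun _ ↦ rfl⟩

namespace realDiscAlgebra

open Polynomial

variable {F G : realDiscAlgebra}

noncomputable instance : CoeFun realDiscAlgebra fun _ ↦ closedBall (0 : ℂ) 1 → ℂ :=
  ⟨fun F ↦ F.1⟩

theorem exists_toRealDiscAlgebra_eq (F : realDiscAlgebra) :
    ∃ f, ∃ hf : IsRDisc f, hf.toRealDiscAlgebra = F := by
  obtain ⟨F, f, hf, hFf⟩ := F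
  exact ⟨f, hf, Subtype.ext (ContinuousMap.ext fun z ↦ (hFf z).symm)⟩

theorem isUnit_iff_forall_ne_zero : IsUnit F ↔ ∀ z, F z ≠ 0 := by
  refine ⟨fun h ↦ (ContinuousMap.isUnit_iff_forall_ne_zero _).1 (h.map realDiscAlgebra.val),
    fun h ↦ ?_⟩
  obtain ⟨f, hf, rfl⟩ := exists_toRealDiscAlgebra_eq F
  have h₀ : ∀ z ∈ closedBall (0 : ℂ) 1, f z ≠ 0 := fun z hz ↦ h ⟨z, hz⟩
  refine IsUnit.of_mul_eq_one (hf.inv h₀).toRealDiscAlgebra ?_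
  ext z
  exact mul_inv_cancel₀ (h₀ z z.2)

theorem isOpen_setOf_isUnit : IsOpen {F : realDiscAlgebra | IsUnit F} := by
  have : {F : realDiscAlgebra | IsUnit F} = Subtype.val ⁻¹' {F | IsUnit F} := by
    ext F
    exact isUnit_iff_forall_ne_zero.trans (ContinuousMap.isUnit_iff_forall_ne_zero _).symm
  rw [this]
  exact Units.isOpen.preimage continuous_subtype_val

/-- The coordinate function `z` of the disc. -/
noncomputable def coord : realDiscAlgebra :=
  IsRDisc.id.toRealDiscAlgebra

theorem aeval_coord_apply (p : ℝ[X]) (z : closedBall (0 : ℂ) 1) :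
    aeval coord p z = aeval (z : ℂ) p :=
  (aeval_algHom_apply ((ContinuousMap.evalAlgHom ℝ ℂ z).comp realDiscAlgebra.val) coord p).symm

theorem denseRange_aeval_coord : DenseRange (aeval coord : ℝ[X] → realDiscAlgebra) := by
  refine Metric.denseRange_iff.2 fun F ε hε ↦ ?_
  obtain ⟨f, hf, rfl⟩ := exists_toRealDiscAlgebra_eq F
  obtain ⟨p, hp⟩ := exists_polynomial_near_of_continuousOn_closedBall hf.1 hf.2.1 hε
  obtain ⟨q, hq⟩ := exists_real_polynomial_aeval_eq_symmetrization p
  refine ⟨q, (ContinuousMap.dist_lt_iff hε).2 fun z ↦ ?_⟩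
  have hz : ‖f z - p.eval (z : ℂ)‖ < ε := hp z z.2
  have hz' : ‖f z - conj (p.eval (conj (z : ℂ)))‖ < ε := by
    rw [hf.2.2 z z.2, ← map_sub, norm_conj]
    exact hp _ (by rw [mem_closedBall_zero_iff, norm_conj]; exact mem_closedBall_zero_iff.1 z.2)
  rw [aeval_coord_apply, dist_eq_norm, hq]
  calc ‖f z - (p.eval (z : ℂ) + conj (p.eval (conj (z : ℂ)))) / 2‖
      = ‖(f z - p.eval (z : ℂ)) + (f z - conj (p.eval (conj (z : ℂ))))‖ / 2 := by
        rw [← Complex.norm_ofNat 2, ← norm_div]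
        congr 1
        ring
    _ ≤ (‖f z - p.eval (z : ℂ)‖ + ‖f z - conj (p.eval (conj (z : ℂ)))‖) / 2 := by
        gcongr
        exact norm_add_le _ _
    _ < ε := by linarith

/-- Write `q = (X - c) (X - conj c)`. For a polynomial `P` with value `w` at `c`, `q` divides
`(P - w) (P - conj w) = ‖w‖² - P (2 Re w - P)`. When `P` is close to `G`, and hence `w` to
`G c ≠ 0`, the element `‖w‖² + (G - P) (2 Re w - P)` of the ideal `(q, G)` is therefore a unit. -/
theorem isCoprime_aeval_conjQuadratic {c : closedBall (0 : ℂ) 1} (hc : G c ≠ 0) :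
    IsCoprime (aeval coord (conjQuadratic c)) G := by
  let U : realDiscAlgebra → realDiscAlgebra := fun P ↦
    algebraMap ℝ _ (‖P c‖ ^ 2) + (G - P) * (algebraMap ℝ _ (2 * (P c).re) - P)
  have : Continuous fun P : realDiscAlgebra ↦ P c :=
    (continuous_eval_const c).comp continuous_subtype_val
  have hU : Continuous U := by
    have := continuous_algebraMap ℝ realDiscAlgebra
    fun_prop
  have hUG : IsUnit (U G) := by
    simp only [U, sub_self, zero_mul, add_zero]
    exact (IsUnit.mk0 _ (pow_ne_zero 2 (norm_ne_zero_iff.2 hc))).map _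
  obtain ⟨p, hp⟩ := denseRange_aeval_coord.exists_mem_open (isOpen_setOf_isUnit.preimage hU)
    ⟨G, hUG⟩
  obtain ⟨u, hu⟩ := hp
  obtain ⟨s, hs⟩ := conjQuadratic_dvd_comp (c : ℂ) p
  have hcomp : aeval coord (conjQuadratic c) * aeval coord s =
      aeval coord p ^ 2 - algebraMap ℝ _ (2 * (aeval coord p c).re) * aeval coord p +
        algebraMap ℝ _ (‖aeval coord p c‖ ^ 2) := by
    rw [← map_mul, ← hs, aeval_comp, ← aeval_coord_apply]
    simp only [conjQuadratic, map_add, map_sub, map_mul, map_pow, aeval_X, aeval_C]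
  refine ⟨↑u⁻¹ * aeval coord s,
    ↑u⁻¹ * (algebraMap ℝ _ (2 * (aeval coord p c).re) - aeval coord p), ?_⟩
  simp only [U] at hu
  linear_combination (↑u⁻¹ : realDiscAlgebra) * hcomp - (↑u⁻¹ : realDiscAlgebra) * hu + u.inv_mul

theorem continuous_aeval_conjQuadratic :
    Continuous fun c ↦ aeval coord (conjQuadratic c) := by
  have := continuous_algebraMap ℝ realDiscAlgebra
  simp only [conjQuadratic, map_add, map_sub, map_pow, map_mul (aeval coord), aeval_X, aeval_C]
  fun_prop

theorem isUnit_aeval_conjQuadratic {c : ℂ} (hc : c ∉ closedBall (0 : ℂ) 1) :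
    IsUnit (aeval coord (conjQuadratic c)) := by
  refine isUnit_iff_forall_ne_zero.2 fun z ↦ ?_
  rw [aeval_coord_apply, aeval_conjQuadratic]
  refine mul_ne_zero (sub_ne_zero.2 fun h ↦ hc (h ▸ z.2)) (sub_ne_zero.2 fun h ↦ hc ?_)
  simpa [h] using z.2

theorem isReduciblePair_aeval_conjQuadratic_of_mem_sphere {c : closedBall (0 : ℂ) 1}
    (hc : (c : ℂ) ∈ sphere (0 : ℂ) 1) (hGc : G c ≠ 0) :
    IsReduciblePair (aeval coord (conjQuadratic c)) G := by
  have hnear := continuous_aeval_conjQuadratic.continuousAt.eventually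
    (eventually_isReduciblePair_iff isOpen_setOf_isUnit (isCoprime_aeval_conjQuadratic hGc))
  have houtside : ∃ᶠ c' in 𝓝 (c : ℂ), c' ∉ closedBall (0 : ℂ) 1 := by
    refine mem_closure_iff_frequently (s := (closedBall 0 1)ᶜ).1 ?_
    rw [closure_compl, interior_closedBall _ one_ne_zero]
    exact fun h ↦ (mem_ball.1 h).ne hc
  obtain ⟨c', hc', hiff⟩ := (houtside.and_eventually hnear).exists
  exact hiff.1 (.of_isUnit (isUnit_aeval_conjQuadratic hc') G)

/-- The zeros of `G` do not disconnect the disc, so `c` can be moved to a point of the circle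
without changing whether the pair is reducible. -/
theorem isReduciblePair_aeval_conjQuadratic {c : closedBall (0 : ℂ) 1} (hGc : G c ≠ 0) :
    IsReduciblePair (aeval coord (conjQuadratic c)) G := by
  obtain ⟨g, hg, rfl⟩ := exists_toRealDiscAlgebra_eq G
  have hne : ∃ z ∈ ball (0 : ℂ) 1, g z ≠ 0 := by
    by_contra! h₀
    have : Set.EqOn g 0 (closedBall 0 1) := .of_subset_closure h₀ hg.1 continuousOn_const
      ball_subset_closedBall (closure_ball _ one_ne_zero).ge
    exact hGc (this c.2)
  obtain ⟨w, hw, hgw⟩ := exists_mem_frontier_ne_zero isBounded_ball hg.diffContOnCl hne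
  rw [frontier_ball _ one_ne_zero] at hw
  have hw' : w ∈ closedBall (0 : ℂ) 1 := sphere_subset_closedBall hw
  refine (isReduciblePair_iff_of_isPreconnected isOpen_setOf_isUnit
    (isPreconnected_closedBall_inter_ne_zero one_ne_zero hg.diffContOnCl hne)
    continuous_aeval_conjQuadratic.continuousOn
    (fun z hz ↦ isCoprime_aeval_conjQuadratic (G := hg.toRealDiscAlgebra) (c := ⟨z, hz.1⟩) hz.2)
    ⟨hw', hgw⟩ ⟨c.2, hGc⟩).1 ?_
  exact isReduciblePair_aeval_conjQuadratic_of_mem_sphere (c := ⟨w, hw'⟩) hw hgw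

theorem isReduciblePair_aeval_of_forall_root (p : ℝ[X])
    (hp : ∀ z : closedBall (0 : ℂ) 1, aeval (z : ℂ) p = 0 → (z : ℂ).im ≠ 0 ∧ G z ≠ 0) :
    IsReduciblePair (aeval coord p) G := by
  induction hn : p.natDegree using Nat.strong_induction_on generalizing p with
  | _ n ih =>
    by_cases hroot : ∃ c : closedBall (0 : ℂ) 1, aeval (c : ℂ) p = 0
    · obtain ⟨c, hc⟩ := hroot
      obtain ⟨him, hGc⟩ := hp c hc
      obtain ⟨q, rfl⟩ : conjQuadratic c ∣ p := p.quadratic_dvd_of_aeval_eq_zero_im_ne_zero hc him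
      have hq : q ≠ 0 := by
        rintro rfl
        simpa using (hp ⟨0, by simp⟩ (by simp)).1
      have hdeg : q.natDegree < n := by
        rw [← hn, natDegree_mul (ne_zero_of_natDegree_gt (n := 1) ?_) hq, natDegree_conjQuadratic]
        · omega
        · rw [natDegree_conjQuadratic]
          norm_num
      rw [map_mul]
      exact (isReduciblePair_aeval_conjQuadratic hGc).mul
        (ih _ hdeg q (fun z hz ↦ hp z (by rw [map_mul, hz, mul_zero])) rfl)
    · push Not at hroot
      refine .of_isUnit (isUnit_iff_forall_ne_zero.2 fun z ↦ ?_) G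
      rw [aeval_coord_apply]
      exact hroot z

/-- The inclusion of the diameter `[-1, 1]` into the closed disc. -/
def ofDiameter : C(Set.Icc (-1 : ℝ) 1, closedBall (0 : ℂ) 1) where
  toFun x := ⟨(x : ℝ), by
    rw [mem_closedBall_zero_iff, norm_real, Real.norm_eq_abs]
    exact abs_le.2 x.2⟩

theorem im_apply_ofDiameter (F : realDiscAlgebra) (x : Set.Icc (-1 : ℝ) 1) :
    (F (ofDiameter x)).im = 0 := by
  obtain ⟨f, hf, rfl⟩ := exists_toRealDiscAlgebra_eq F
  have hx : f (x : ℝ) = conj (f (conj ((x : ℝ) : ℂ))) := hf.2.2 _ (ofDiameter x).2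
  rw [conj_ofReal] at hx
  exact conj_eq_iff_im.1 hx.symm

/-- Restriction to the diameter, where the elements of `A_ℝ(D)` are real-valued. -/
noncomputable def toDiameter : realDiscAlgebra →ₐ[ℝ] C(Set.Icc (-1 : ℝ) 1, ℝ) where
  toFun F := ⟨fun x ↦ (F (ofDiameter x)).re, by fun_prop⟩
  map_one' := rfl
  map_zero' := rfl
  map_add' _ _ := rfl
  map_mul' F G := by
    ext x
    simp [im_apply_ofDiameter]
  commutes' _ := rfl

theorem toDiameter_apply (F : realDiscAlgebra) (x : Set.Icc (-1 : ℝ) 1) :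
    toDiameter F x = (F (ofDiameter x)).re :=
  rfl

theorem continuous_toDiameter : Continuous toDiameter := by
  have : Continuous fun F : realDiscAlgebra ↦ F.1.comp ofDiameter :=
    (ContinuousMap.continuous_precomp ofDiameter).comp continuous_subtype_val
  exact (ContinuousMap.continuous_postcomp ⟨re, continuous_re⟩).comp this

theorem isReduciblePair_of_toDiameter_pos (h : IsCoprime F G) (hF : ∀ x, 0 < toDiameter F x) :
    IsReduciblePair F G := by
  have hpos : ∀ᶠ P in 𝓝 F, ∀ x, 0 < toDiameter P x := by
    have := (ContinuousMap.isOpen_setOfPred_mapsTo isCompact_univ isOpen_Ioi).preimage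
      continuous_toDiameter |>.mem_nhds (x := F) (fun x _ ↦ hF x)
    filter_upwards [this] with P hP x using hP (Set.mem_univ x)
  have hnear := (eventually_isCoprime isOpen_setOf_isUnit h).and
    ((eventually_isReduciblePair_iff isOpen_setOf_isUnit h).and hpos)
  obtain ⟨_, ⟨p, rfl⟩, ⟨s, t, hst⟩, hiff, hpos⟩ :=
    (mem_closure_iff_frequently.1 (denseRange_aeval_coord F)).and_eventually hnear |>.exists
  refine hiff.1 (isReduciblePair_aeval_of_forall_root p fun z hz ↦ ⟨fun him ↦ ?_, fun hGz ↦ ?_⟩)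
  · have hre : ((z : ℂ).re : ℂ) = z := Complex.ext rfl him.symm
    let x : Set.Icc (-1 : ℝ) 1 :=
      ⟨(z : ℂ).re, abs_le.1 ((abs_re_le_norm _).trans (mem_closedBall_zero_iff.1 z.2))⟩
    have hx : ofDiameter x = z := Subtype.ext hre
    refine (hpos x).ne' ?_
    rw [toDiameter_apply, hx, aeval_coord_apply, hz, zero_re]
  · have : s z * aeval coord p z + t z * G z = 1 := congrArg (fun H : realDiscAlgebra ↦ H z) hst
    rw [aeval_coord_apply, hz, hGz, mul_zero, mul_zero, add_zero] at this
    exact zero_ne_one this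

theorem isReduciblePair_of_toDiameter_pos_of_eq_zero (h : IsCoprime F G)
    (hF : ∀ x, toDiameter G x = 0 → 0 < toDiameter F x) : IsReduciblePair F G := by
  obtain ⟨M, hM⟩ := exists_forall_add_mul_pos (toDiameter F).continuous
    ((toDiameter G).continuous.pow 2) (fun x ↦ sq_nonneg (toDiameter G x))
    (fun x hx ↦ hF x (pow_eq_zero_iff two_ne_zero |>.1 hx))
  refine (isReduciblePair_add_mul_right_iff (k := M • G)).1
    (isReduciblePair_of_toDiameter_pos (h.add_mul_right_left _) fun x ↦ ?_)
  convert hM x using 1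
  rw [map_add, map_mul, map_smul, ContinuousMap.add_apply, ContinuousMap.mul_apply,
    ContinuousMap.smul_apply, smul_eq_mul, mul_assoc, ← pow_two]
  rfl

theorem isReduciblePair_iff (h : IsCoprime F G) :
    IsReduciblePair F G ↔ (∀ x, toDiameter G x = 0 → 0 < toDiameter F x) ∨
      ∀ x, toDiameter G x = 0 → toDiameter F x < 0 := by
  constructor
  · rintro ⟨H, hunit⟩
    have hval : ∀ x, toDiameter G x = 0 → toDiameter (F + H * G) x = toDiameter F x := by
      intro x hx
      rw [map_add, map_mul, ContinuousMap.add_apply, ContinuousMap.mul_apply, hx, mul_zero,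
        add_zero]
    have : PreconnectedSpace (Set.Icc (-1 : ℝ) 1) := Subtype.preconnectedSpace isPreconnected_Icc
    have hne := (ContinuousMap.isUnit_iff_forall_ne_zero _).1 (hunit.map toDiameter)
    exact (forall_pos_or_forall_neg_of_forall_ne_zero (map_continuous _) hne).imp
      (fun hpos x hx ↦ hval x hx ▸ hpos x) (fun hneg x hx ↦ hval x hx ▸ hneg x)
  · rintro (hpos | hneg)
    · exact isReduciblePair_of_toDiameter_pos_of_eq_zero h hpos
    · rw [← neg_neg F]
      refine (isReduciblePair_of_toDiameter_pos_of_eq_zero h.neg_left fun x hx ↦ ?_).neg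
      rw [map_neg, ContinuousMap.neg_apply]
      exact neg_pos.2 (hneg x hx)

end realDiscAlgebra

theorem IsRDisc.im_apply_ofReal {f : ℂ → ℂ} (hf : IsRDisc f) {x : ℝ} (hx : x ∈ Set.Icc (-1) 1) :
    (f x).im = 0 :=
  realDiscAlgebra.im_apply_ofDiameter hf.toRealDiscAlgebra ⟨x, hx⟩

/-- At a real zero of the determinant, the only possible ratio of the two pairs is
`a f₂ + b g₂`. -/
theorem signLinked_iff_constSignOnRealZeros {f₁ g₁ f₂ g₂ a b : ℂ → ℂ}
    (h : ∀ x ∈ Set.Icc (-1 : ℝ) 1, a x * f₁ x + b x * g₁ x = 1)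
    (him : ∀ x ∈ Set.Icc (-1 : ℝ) 1, (a x * f₂ x + b x * g₂ x).im = 0) :
    SignLinked f₁ g₁ f₂ g₂ ↔
      ConstSignOnRealZeros (fun z ↦ a z * f₂ z + b z * g₂ z)
        (fun z ↦ f₁ z * g₂ z - f₂ z * g₁ z) := by
  let Z : Set ℝ := {x | x ∈ Set.Icc (-1 : ℝ) 1 ∧ f₁ x * g₂ x - f₂ x * g₁ x = 0}
  let F : ℝ → ℝ := fun x ↦ (a x * f₂ x + b x * g₂ x).re
  have hratio : ∀ x ∈ Z, ∀ c : ℝ, (f₂ x = c * f₁ x ∧ g₂ x = c * g₁ x) ↔ F x = c := by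
    rintro x ⟨hx, hdet⟩ c
    rw [eq_mul_and_eq_mul_iff_of_bezout (h x hx) hdet, Complex.ext_iff]
    simp only [him x hx, ofReal_re, ofReal_im, and_true, F]
  calc SignLinked f₁ g₁ f₂ g₂
      ↔ ∀ x ∈ Z, ∀ y ∈ Z, 0 < F x * F y := by
        constructor
        · intro hsign x hx y hy
          obtain ⟨hfx, hgx⟩ := (hratio x hx (F x)).2 rfl
          obtain ⟨hfy, hgy⟩ := (hratio y hy (F y)).2 rfl
          exact hsign x y hx.1 hy.1 hx.2 hy.2 _ _ hfx hgx hfy hgy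
        · intro hpos x y hx hy hdx hdy c d hfx hgx hfy hgy
          rw [← (hratio x ⟨hx, hdx⟩ c).1 ⟨hfx, hgx⟩, ← (hratio y ⟨hy, hdy⟩ d).1 ⟨hfy, hgy⟩]
          exact hpos x ⟨hx, hdx⟩ y ⟨hy, hdy⟩
    _ ↔ (∀ x ∈ Z, 0 < F x) ∨ ∀ x ∈ Z, F x < 0 := forall_mul_pos_iff_forall_pos_or_forall_neg
    _ ↔ _ := by
        simp only [Z, F, Set.mem_ofPred_eq, and_imp, ConstSignOnRealZeros]

theorem isRDiscUnit_iff_isUnit {f : ℂ → ℂ} (hf : IsRDisc f) :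
    IsRDiscUnit f ↔ IsUnit hf.toRealDiscAlgebra := by
  rw [realDiscAlgebra.isUnit_iff_forall_ne_zero, Subtype.forall]
  exact and_iff_right hf

theorem BezoutPair.isCoprime_toRealDiscAlgebra {f g : ℂ → ℂ} (hf : IsRDisc f) (hg : IsRDisc g)
    (h : BezoutPair f g) : IsCoprime hf.toRealDiscAlgebra hg.toRealDiscAlgebra := by
  obtain ⟨α, β, hα, hβ, h⟩ := h
  refine ⟨hα.toRealDiscAlgebra, hβ.toRealDiscAlgebra, ?_⟩
  ext z
  exact h z z.2

theorem exists_isRDiscUnit_and_isRDiscUnit_iff {f₁ g₁ f₂ g₂ : ℂ → ℂ} (hf₁ : IsRDisc f₁)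
    (hg₁ : IsRDisc g₁) (hf₂ : IsRDisc f₂) (hg₂ : IsRDisc g₂) :
    (∃ α β : ℂ → ℂ, IsRDisc α ∧ IsRDisc β ∧ IsRDiscUnit (fun z ↦ α z * f₁ z + β z * g₁ z) ∧
        IsRDiscUnit (fun z ↦ α z * f₂ z + β z * g₂ z)) ↔
      ∃ A B : realDiscAlgebra, IsUnit (A * hf₁.toRealDiscAlgebra + B * hg₁.toRealDiscAlgebra) ∧
        IsUnit (A * hf₂.toRealDiscAlgebra + B * hg₂.toRealDiscAlgebra) := by
  constructor
  · rintro ⟨α, β, hα, hβ, h₁, h₂⟩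
    exact ⟨hα.toRealDiscAlgebra, hβ.toRealDiscAlgebra,
      (isRDiscUnit_iff_isUnit ((hα.mul hf₁).add (hβ.mul hg₁))).1 h₁,
      (isRDiscUnit_iff_isUnit ((hα.mul hf₂).add (hβ.mul hg₂))).1 h₂⟩
  · rintro ⟨A, B, h₁, h₂⟩
    obtain ⟨α, hα, rfl⟩ := realDiscAlgebra.exists_toRealDiscAlgebra_eq A
    obtain ⟨β, hβ, rfl⟩ := realDiscAlgebra.exists_toRealDiscAlgebra_eq B
    exact ⟨α, β, hα, hβ,
      (isRDiscUnit_iff_isUnit ((hα.mul hf₁).add (hβ.mul hg₁))).2 h₁,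
      (isRDiscUnit_iff_isUnit ((hα.mul hf₂).add (hβ.mul hg₂))).2 h₂⟩

theorem isReduciblePair_iff_constSignOnRealZeros {f g : ℂ → ℂ} (hf : IsRDisc f) (hg : IsRDisc g)
    (h : IsCoprime hf.toRealDiscAlgebra hg.toRealDiscAlgebra) :
    IsReduciblePair hf.toRealDiscAlgebra hg.toRealDiscAlgebra ↔ ConstSignOnRealZeros f g := by
  have hzero : ∀ x : Set.Icc (-1 : ℝ) 1,
      realDiscAlgebra.toDiameter hg.toRealDiscAlgebra x = 0 ↔ g (x : ℝ) = 0 := fun x ↦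
    (and_iff_left (hg.im_apply_ofReal x.2)).symm.trans (Complex.ext_iff (w := 0)).symm
  simp only [realDiscAlgebra.isReduciblePair_iff h, hzero, Subtype.forall]
  rfl

theorem simultaneous_stabilization_iff_sign_linked (f₁ g₁ f₂ g₂ : ℂ → ℂ)
    (hf₁ : IsRDisc f₁) (hg₁ : IsRDisc g₁) (hf₂ : IsRDisc f₂) (hg₂ : IsRDisc g₂)
    (hinv₁ : BezoutPair f₁ g₁) (hinv₂ : BezoutPair f₂ g₂) :
    (∃ α β : ℂ → ℂ, IsRDisc α ∧ IsRDisc β ∧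
        IsRDiscUnit (fun z => α z * f₁ z + β z * g₁ z) ∧
        IsRDiscUnit (fun z => α z * f₂ z + β z * g₂ z)) ↔
      SignLinked f₁ g₁ f₂ g₂ := by
  obtain ⟨a, b, ha, hb, hab⟩ := hinv₁
  have hF := (ha.mul hf₂).add (hb.mul hg₂)
  have hdet := (hf₁.mul hg₂).sub (hf₂.mul hg₁)
  have hbezout : ha.toRealDiscAlgebra * hf₁.toRealDiscAlgebra +
      hb.toRealDiscAlgebra * hg₁.toRealDiscAlgebra = 1 := by
    ext z
    exact hab z z.2
  have hcop := isCoprime_bezout_comb_det hbezout (hinv₂.isCoprime_toRealDiscAlgebra hf₂ hg₂)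
  calc _ ↔ ∃ A B : realDiscAlgebra,
        IsUnit (A * hf₁.toRealDiscAlgebra + B * hg₁.toRealDiscAlgebra) ∧
          IsUnit (A * hf₂.toRealDiscAlgebra + B * hg₂.toRealDiscAlgebra) :=
      exists_isRDiscUnit_and_isRDiscUnit_iff hf₁ hg₁ hf₂ hg₂
    _ ↔ IsReduciblePair hF.toRealDiscAlgebra hdet.toRealDiscAlgebra :=
      exists_isUnit_and_isUnit_iff_isReduciblePair hbezout
    _ ↔ ConstSignOnRealZeros _ _ := isReduciblePair_iff_constSignOnRealZeros hF hdet hcop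
    _ ↔ SignLinked f₁ g₁ f₂ g₂ := (signLinked_iff_constSignOnRealZeros
      (fun x hx ↦ hab x (realDiscAlgebra.ofDiameter ⟨x, hx⟩).2)
      (fun x hx ↦ hF.im_apply_ofReal hx)).symm
end

section
/- There exists a natural number n such that there is no function h in the real disc algebra A_ℝ(D) for which both z ↦ 1 + h(z)z² and z ↦ n²z² + h(z) are units of A_ℝ(D). -/
open Complex Metric ComplexConjugate

/-! Put `c = n²`, `u = 1 + h z²` and `v = c z² + h`, so that `u - z² v = 1 - c z⁴`. Then
`z² v / u` omits `0` and `1` on the disc punctured at `0` and at the four roots of `c z⁴ = 1`; for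
large `c` these roots are close to `0`, and what remains contains a thick annulus. A logarithm `L`
of the quotient in the coordinate `s = log z` omits `2πiℤ` and gains `4πi` when `s` moves by `2πi`.

On the core circle of the annulus the quotient has modulus one somewhere. Since `z² v / u` equals
`1` at a root, the maximum principle provides a point where its modulus is at least `1`. Since
`u / v` equals `z²` at all four roots, the Schwarz lemma applied to the part of `u / v` of order
`2` modulo `4` provides a point where `|u / v|` is at least `|z|²`. Between the two there is a point
where `L` is purely imaginary. Around this point `L` omits `2πiℤ` on a disc of large radius, so
Schottky's theorem forbids a gain of `4πi` at distance `2π`. -/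

open Set Filter Topology Bornology

section HolomorphicBranches

variable {U : Set ℂ} {f : ℂ → ℂ}

lemma exists_differentiableOn_exp_eq (hU : IsOpen U) (hsc : IsSimplyConnected U)
    (hf : DifferentiableOn ℂ f U) (hf0 : ∀ z ∈ U, f z ≠ 0) :
    ∃ g : ℂ → ℂ, DifferentiableOn ℂ g U ∧ ∀ z ∈ U, exp (g z) = f z := by
  obtain ⟨g, hgc, hg⟩ := exists_continuousOn_eqOn_exp_comp hsc hU hf.continuousOn
    (by rintro ⟨z, hz, h⟩; exact hf0 z hz h)
  refine ⟨g, fun z hz => DifferentiableAt.differentiableWithinAt ?_, hg⟩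
  have hzU : U ∈ 𝓝 z := hU.mem_nhds hz
  have hlog : (fun w => g z + log (f w / f z)) =ᶠ[𝓝 z] g := by
    have him : Tendsto (fun w => (g w - g z).im) (𝓝 z) (𝓝 0) := by
      simpa using! continuous_im.continuousAt.tendsto.comp
        ((hgc.continuousAt hzU).sub_const (g z))
    filter_upwards [hzU, him (Ioo_mem_nhds (neg_lt_zero.2 Real.pi_pos) Real.pi_pos)]
      with w hw hIoo
    rw [← hg hw, ← hg hz, Function.comp_apply, Function.comp_apply, ← exp_sub,
      log_exp hIoo.1 hIoo.2.le, add_sub_cancel]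
  refine DifferentiableAt.congr_of_eventuallyEq ?_ hlog.symm
  refine (((hf.differentiableAt hzU).div_const (f z)).clog ?_).const_add (g z)
  simp [div_self (hf0 z hz)]

lemma exists_differentiableOn_cos_eq (hU : IsOpen U) (hsc : IsSimplyConnected U)
    (hf : DifferentiableOn ℂ f U) (h1 : ∀ z ∈ U, f z ≠ 1) (hneg1 : ∀ z ∈ U, f z ≠ -1) :
    ∃ q : ℂ → ℂ, DifferentiableOn ℂ q U ∧ ∀ z ∈ U, cos (q z) = f z := by
  have hsq : ∀ z ∈ U, f z ^ 2 - 1 ≠ 0 := fun z hz =>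
    sub_ne_zero.2 (sq_ne_one_iff.2 ⟨h1 z hz, hneg1 z hz⟩)
  obtain ⟨l, hl, hlf⟩ := exists_differentiableOn_exp_eq (f := fun z => f z ^ 2 - 1) hU hsc
    ((hf.pow 2).sub_const 1) hsq
  have hroot : ∀ z ∈ U, (f z + exp (l z / 2)) * (f z - exp (l z / 2)) = 1 := fun z hz => by
    have : exp (l z / 2) ^ 2 = f z ^ 2 - 1 := by
      rw [← exp_nat_mul, ← hlf z hz, Nat.cast_ofNat, mul_div_cancel₀ _ two_ne_zero]
    linear_combination -this
  obtain ⟨g, hg, hgf⟩ := exists_differentiableOn_exp_eq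
    (f := fun z => f z + exp (l z / 2)) hU hsc (hf.add (hl.div_const 2).cexp)
    fun z hz => left_ne_zero_of_mul_eq_one (hroot z hz)
  refine ⟨fun z => g z * -I, hg.mul_const (-I), fun z hz => ?_⟩
  have hexp : g z * -I * I = g z := by rw [mul_assoc, neg_mul, I_mul_I, neg_neg, mul_one]
  rw [cos, neg_mul, hexp, exp_neg, hgf z hz, inv_eq_of_mul_eq_one_right (hroot z hz)]
  ring

end HolomorphicBranches

lemma isSimplyConnected_ball (c : ℂ) {r : ℝ} (hr : 0 < r) : IsSimplyConnected (ball c r) :=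
  have := (convex_ball c r).contractibleSpace (nonempty_ball.2 hr)
  SimplyConnectedSpace.ofContractible _

section Bloch

variable {f : ℂ → ℂ} {c : ℂ} {r : ℝ}

lemma norm_sub_sub_deriv_mul_le (hr : 0 < r) (hf : DifferentiableOn ℂ f (ball c r))
    (hbound : ∀ z ∈ ball c r, ‖deriv f z‖ ≤ 2 * ‖deriv f c‖) {z : ℂ}
    (hz : z ∈ closedBall c (r / 6)) :
    ‖f z - f c - deriv f c * (z - c)‖ ≤ ‖deriv f c‖ / 2 * ‖z - c‖ := by
  have hsub : closedBall c (r / 6) ⊆ ball c r := closedBall_subset_ball (by linarith)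
  have hmaps : MapsTo (deriv f) (ball c r) (closedBall (deriv f c) (3 * ‖deriv f c‖)) :=
    fun w hw => by
      rw [mem_closedBall, dist_eq_norm]
      linarith [norm_sub_le (deriv f w) (deriv f c), hbound w hw]
  have hderiv : ∀ w ∈ closedBall c (r / 6), ‖deriv f w - deriv f c‖ ≤ ‖deriv f c‖ / 2 :=
    fun w hw => by
      rw [← dist_eq_norm]
      calc dist (deriv f w) (deriv f c) ≤ 3 * ‖deriv f c‖ / r * dist w c :=
            dist_le_div_mul_dist_of_mapsTo_ball (hf.deriv isOpen_ball) hmaps (hsub hw)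
        _ ≤ 3 * ‖deriv f c‖ / r * (r / 6) := by gcongr; exact hw
        _ = ‖deriv f c‖ / 2 := by field_simp; ring
  have hrem : ∀ w ∈ closedBall c (r / 6), HasDerivWithinAt (fun w => f w - deriv f c * w)
      (deriv f w - deriv f c) (closedBall c (r / 6)) w := fun w hw => by
    simpa only [mul_one] using! ((hf.differentiableAt
      (isOpen_ball.mem_nhds (hsub hw))).hasDerivAt.sub
        ((hasDerivAt_id w).const_mul (deriv f c))).hasDerivWithinAt
  rw [show f z - f c - deriv f c * (z - c) = f z - deriv f c * z - (f c - deriv f c * c) by ring]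
  exact (convex_closedBall c (r / 6)).norm_image_sub_le_of_norm_hasDerivWithin_le hrem hderiv
    (mem_closedBall_self (by positivity)) hz

lemma ball_subset_image_of_norm_deriv_le (hr : 0 < r) (hf : DifferentiableOn ℂ f (ball c r))
    (hbound : ∀ z ∈ ball c r, ‖deriv f z‖ ≤ 2 * ‖deriv f c‖) :
    ball (f c) (‖deriv f c‖ * r / 24) ⊆ f '' ball c r := by
  rcases (norm_nonneg (deriv f c)).eq_or_lt with h0 | h0
  · simp [← h0]
  have hsub : closedBall c (r / 6) ⊆ ball c r := closedBall_subset_ball (by linarith)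
  have hsphere : ∀ z ∈ sphere c (r / 6), ‖deriv f c‖ * r / 12 ≤ ‖f z - f c‖ := fun z hz => by
    have hlin := norm_sub_sub_deriv_mul_le hr hf hbound (sphere_subset_closedBall hz)
    have htri := norm_sub_norm_le (deriv f c * (z - c)) (f z - f c)
    rw [norm_sub_rev (deriv f c * (z - c)), norm_mul] at htri
    rw [mem_sphere, dist_eq_norm] at hz
    rw [hz] at hlin htri
    linarith
  have hnonconst : ∃ᶠ z in 𝓝 c, f z ≠ f c := fun hev => by
    have hconst : f =ᶠ[𝓝 c] fun _ => f c := hev.mono fun z hz => not_not.1 hz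
    rw [hconst.deriv_eq, deriv_const, norm_zero] at h0
    exact h0.false
  have himage := ((hf.mono hsub).diffContOnCl_ball subset_rfl).ball_subset_image_closedBall
    (by positivity) hsphere hnonconst
  rw [div_div, show (12 * 2 : ℝ) = 24 by norm_num] at himage
  exact himage.trans (image_mono hsub)

/-- Bloch's theorem: the preceding lemma applies at the point where
`‖deriv f z‖ * (r - ‖z - c‖)` is maximal. -/
lemma exists_ball_subset_image {U : Set ℂ} (hU : IsOpen U) (hsub : closedBall c r ⊆ U)
    (hf : DifferentiableOn ℂ f U) :
    ∃ w, ball w (‖deriv f c‖ * r / 48) ⊆ f '' closedBall c r := by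
  rcases le_or_gt (‖deriv f c‖ * r) 0 with hneg | hpos
  · exact ⟨0, by simp [ball_eq_empty.2 (by linarith : ‖deriv f c‖ * r / 48 ≤ 0)]⟩
  have hr : 0 < r := pos_of_mul_pos_right hpos (norm_nonneg _)
  have hcont : ContinuousOn (fun z => ‖deriv f z‖ * (r - ‖z - c‖)) (closedBall c r) :=
    ((hf.deriv hU).continuousOn.mono hsub).norm.mul (by fun_prop)
  obtain ⟨w, -, hmax⟩ := (isCompact_closedBall c r).exists_isMaxOn
    ⟨c, mem_closedBall_self hr.le⟩ hcont
  rw [isMaxOn_iff] at hmax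
  obtain ⟨t, ht⟩ : ∃ t, r - ‖w - c‖ = 2 * t := ⟨_, (mul_div_cancel₀ _ two_ne_zero).symm⟩
  have hc : ‖deriv f c‖ * r ≤ ‖deriv f w‖ * (2 * t) := by
    have hmax_c := hmax c (mem_closedBall_self hr.le)
    rwa [sub_self, norm_zero, sub_zero, ht] at hmax_c
  have ht0 : 0 < t := by
    have := pos_of_mul_pos_right (hpos.trans_le hc) (norm_nonneg _)
    linarith
  have hdist : ∀ z ∈ ball w t, t ≤ r - ‖z - c‖ := fun z hz => by
    rw [mem_ball, dist_eq_norm] at hz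
    linarith [norm_sub_le_norm_sub_add_norm_sub z w c]
  have hball : ball w t ⊆ closedBall c r := fun z hz => by
    rw [mem_closedBall, dist_eq_norm]
    linarith [hdist z hz]
  have hderiv : ∀ z ∈ ball w t, ‖deriv f z‖ ≤ 2 * ‖deriv f w‖ := fun z hz => by
    refine le_of_mul_le_mul_right ?_ ht0
    calc ‖deriv f z‖ * t ≤ ‖deriv f z‖ * (r - ‖z - c‖) := by gcongr; exact hdist z hz
      _ ≤ ‖deriv f w‖ * (r - ‖w - c‖) := hmax z (hball hz)
      _ = 2 * ‖deriv f w‖ * t := by rw [ht]; ring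
  refine ⟨f w, Subset.trans (ball_subset_ball ?_) ((ball_subset_image_of_norm_deriv_le ht0
    (hf.mono (hball.trans hsub)) hderiv).trans (image_mono hball))⟩
  linarith

lemma norm_deriv_mul_le_of_forall_exists_notMem_image {δ : ℝ} (hf : DifferentiableOn ℂ f (ball c r))
    (homit : ∀ w, ∃ p ∈ ball w δ, p ∉ f '' ball c r) : ‖deriv f c‖ * r ≤ 48 * δ := by
  by_contra! hlt
  have hδ : 0 < δ := nonempty_ball.1 ((homit 0).imp fun _ hp => hp.1)
  rcases (norm_nonneg (deriv f c)).eq_or_lt with h0 | h0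
  · rw [← h0] at hlt
    linarith
  obtain ⟨s, hs, hsr⟩ := exists_between ((div_lt_iff₀' h0).2 hlt)
  have hsub : closedBall c s ⊆ ball c r := closedBall_subset_ball hsr
  obtain ⟨w, hw⟩ := exists_ball_subset_image isOpen_ball hsub hf
  obtain ⟨p, hp, hpf⟩ := homit w
  have hδs : δ ≤ ‖deriv f c‖ * s / 48 := by
    rw [div_lt_iff₀' h0] at hs
    linarith
  exact hpf (image_mono hsub (hw (ball_subset_ball hδs hp)))

end Bloch

lemma exists_mem_Icc_cosh_eq_odd {x : ℝ} (hx : 0 ≤ x) :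
    ∃ y ∈ Icc x (x + 2), ∃ k : ℤ, Odd k ∧ Real.cosh y = k := by
  have hgap : Real.cosh x + 2 ≤ Real.cosh (x + 2) := by
    have hcosh2 : 3 ≤ Real.cosh 2 := by
      have := Real.cosh_two_mul 1
      rw [mul_one] at this
      nlinarith [Real.cosh_sq 1, Real.self_le_sinh_iff.2 zero_le_one]
    rw [Real.cosh_add]
    nlinarith [Real.one_le_cosh x, mul_nonneg (Real.sinh_nonneg_iff.2 hx)
      (Real.sinh_nonneg_iff.2 zero_le_two)]
  set k : ℤ := 2 * ⌈(Real.cosh x - 1) / 2⌉ + 1 with hk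
  have hcast : (k : ℝ) = 2 * ⌈(Real.cosh x - 1) / 2⌉ + 1 := by rw [hk]; push_cast; rfl
  have hmem : (k : ℝ) ∈ Icc (Real.cosh x) (Real.cosh (x + 2)) := by
    constructor
    · linarith [Int.le_ceil ((Real.cosh x - 1) / 2)]
    · linarith [Int.ceil_lt_add_one ((Real.cosh x - 1) / 2)]
  obtain ⟨y, hy, hyk⟩ := intermediate_value_Icc (by linarith) Real.continuous_cosh.continuousOn hmem
  exact ⟨y, hy, k, odd_two_mul_add_one _, hyk⟩

lemma exists_abs_sub_le_cosh_eq_odd (x : ℝ) :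
    ∃ y, |y - x| ≤ 2 ∧ ∃ k : ℤ, Odd k ∧ Real.cosh y = k := by
  wlog hx : 0 ≤ x generalizing x
  · obtain ⟨y, hy, hk⟩ := this (-x) (by linarith)
    exact ⟨-y, by rwa [← abs_neg, neg_sub', neg_neg], by rwa [Real.cosh_neg]⟩
  · obtain ⟨y, hy, hk⟩ := exists_mem_Icc_cosh_eq_odd hx
    exact ⟨y, abs_le.2 ⟨by linarith [hy.1], by linarith [hy.2]⟩, hk⟩

lemma exists_int_abs_mul_pi_sub_le (x : ℝ) : ∃ j : ℤ, |j * Real.pi - x| ≤ Real.pi / 2 := by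
  refine ⟨round (x / Real.pi), ?_⟩
  have hx : round (x / Real.pi) * Real.pi - x
      = -((x / Real.pi - round (x / Real.pi)) * Real.pi) := by
    field_simp
    ring
  rw [hx, abs_neg, abs_mul, abs_of_pos Real.pi_pos]
  nlinarith [abs_sub_round (x / Real.pi), Real.pi_pos]

lemma exists_mem_ball_cos_eq_odd (w : ℂ) : ∃ p ∈ ball w 4, ∃ k : ℤ, Odd k ∧ cos p = k := by
  obtain ⟨j, hj⟩ := exists_int_abs_mul_pi_sub_le w.re
  obtain ⟨y, hy, k, hk, hyk⟩ := exists_abs_sub_le_cosh_eq_odd w.im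
  refine ⟨y * I + j * Real.pi, ?_, ?_⟩
  · rw [mem_ball, dist_eq_norm]
    calc ‖y * I + j * Real.pi - w‖
        ≤ |(y * I + j * Real.pi - w).re| + |(y * I + j * Real.pi - w).im| :=
          norm_le_abs_re_add_abs_im _
      _ = |j * Real.pi - w.re| + |y - w.im| := by simp
      _ < 4 := by linarith [Real.pi_lt_four]
  · have hcos : cos (y * I) = k := by rw [cos_mul_I, ← ofReal_cosh, hyk, ofReal_intCast]
    rcases Int.even_or_odd j with hj' | hj'
    · exact ⟨k, hk, by rw [cos_antiperiodic.add_int_mul_eq, hcos, Int.negOnePow_even j hj']; simp⟩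
    · exact ⟨-k, hk.neg, by
        rw [cos_antiperiodic.add_int_mul_eq, hcos, Int.negOnePow_odd j hj']; simp⟩

lemma norm_cos_le_cosh_im (z : ℂ) : ‖cos z‖ ≤ Real.cosh z.im := by
  rw [cos, Real.cosh_eq, norm_div, norm_ofNat]
  gcongr
  refine (norm_add_le _ _).trans_eq ?_
  simp [norm_exp, add_comm]

lemma im_eq_zero_of_cos_eq_ofReal {z : ℂ} {x : ℝ} (hx : x ∈ Icc (-1) 1) (hz : cos z = x) :
    z.im = 0 := by
  rw [← Real.cos_arccos hx.1 hx.2, ofReal_cos, eq_comm, cos_eq_cos_iff] at hz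
  obtain ⟨k, rfl | rfl⟩ := hz <;> simp

/-- A form of Schottky's theorem: omitting `±1` makes `f` a cosine `cos ∘ q`, and omitting the
remaining odd integers makes `q` omit a point of every disc of radius `4`, so that Bloch's theorem
bounds the derivative of `q`. -/
lemma norm_le_cosh_of_forall_ne_odd {f : ℂ → ℂ} {c z : ℂ} {R x : ℝ}
    (hf : DifferentiableOn ℂ f (ball c R)) (hodd : ∀ w ∈ ball c R, ∀ k : ℤ, Odd k → f w ≠ k)
    (hx : x ∈ Icc (-1) 1) (hfc : f c = x) (hz : z ∈ ball c R) :
    ‖f z‖ ≤ Real.cosh (192 * ‖z - c‖ / (R - ‖z - c‖)) := by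
  have hR : 0 < R := nonempty_ball.1 ⟨z, hz⟩
  obtain ⟨q, hq, hqf⟩ := exists_differentiableOn_cos_eq isOpen_ball (isSimplyConnected_ball c hR)
    hf (fun w hw => by simpa using hodd w hw 1 odd_one)
    (fun w hw => by simpa using hodd w hw (-1) odd_one.neg)
  set t := ‖z - c‖
  have htR : 0 < R - t := sub_pos.2 (by rwa [mem_ball, dist_eq_norm] at hz)
  have hmem : z ∈ closedBall c t := by rw [mem_closedBall, dist_eq_norm]
  have hsub : closedBall c t ⊆ ball c R := closedBall_subset_ball (sub_pos.1 htR)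
  have hderiv : ∀ w ∈ closedBall c t, ‖deriv q w‖ ≤ 192 / (R - t) := fun w hw => by
    have hball : ball w (R - t) ⊆ ball c R :=
      ball_subset_ball' (by linarith [mem_closedBall.1 hw])
    rw [le_div_iff₀ htR]
    refine (norm_deriv_mul_le_of_forall_exists_notMem_image (hq.mono hball) fun p => ?_).trans_eq
      (by norm_num : (48 * 4 : ℝ) = 192)
    obtain ⟨p', hp', k, hk, hcos⟩ := exists_mem_ball_cos_eq_odd p
    refine ⟨p', hp', ?_⟩
    rintro ⟨w', hw', rfl⟩
    exact hodd w' (hball hw') k hk ((hqf w' (hball hw')).symm.trans hcos)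
  have hqc : (q c).im = 0 :=
    im_eq_zero_of_cos_eq_ofReal hx ((hqf c (mem_ball_self hR)).trans hfc)
  have him : |(q z).im| ≤ 192 * t / (R - t) := calc
    |(q z).im| = |(q z - q c).im| := by rw [sub_im, hqc, sub_zero]
    _ ≤ ‖q z - q c‖ := abs_im_le_norm _
    _ ≤ 192 / (R - t) * t := (convex_closedBall c t).norm_image_sub_le_of_norm_deriv_le
        (fun w hw => hq.differentiableAt (isOpen_ball.mem_nhds (hsub hw))) hderiv
        (mem_closedBall_self (norm_nonneg _)) hmem
    _ = 192 * t / (R - t) := by ring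
  rw [← hqf z hz]
  exact (norm_cos_le_cosh_im _).trans (Real.cosh_le_cosh.2 (him.trans (le_abs_self _)))

lemma norm_sub_le_cosh_add_one_of_forall_ne_odd {f : ℂ → ℂ} {c z : ℂ} {R : ℝ}
    (hf : DifferentiableOn ℂ f (ball c R)) (hodd : ∀ w ∈ ball c R, ∀ k : ℤ, Odd k → f w ≠ k)
    (hfc : (f c).im = 0) (hz : z ∈ ball c R) :
    ‖f z - f c‖ ≤ Real.cosh (192 * ‖z - c‖ / (R - ‖z - c‖)) + 1 := by
  set m : ℤ := round ((f c).re / 2)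
  have hmem : (f c).re - 2 * m ∈ Icc (-1) 1 := by
    have := abs_le.1 (abs_sub_round ((f c).re / 2))
    constructor <;> linarith
  have hfm : f c - 2 * m = ((f c).re - 2 * m : ℝ) := by
    apply Complex.ext <;> simp [hfc]
  have hodd' : ∀ w ∈ ball c R, ∀ k : ℤ, Odd k → f w - 2 * m ≠ k := fun w hw k hk h =>
    hodd w hw (k + 2 * m) (hk.add_even (even_two_mul m)) (by push_cast; linear_combination h)
  have hbound := norm_le_cosh_of_forall_ne_odd (f := fun w => f w - 2 * m) (hf.sub_const _) hodd'
    hmem hfm hz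
  have hcenter : ‖f c - 2 * m‖ ≤ 1 := by
    rw [hfm, norm_real, Real.norm_eq_abs]
    exact abs_le.2 hmem
  calc ‖f z - f c‖ = ‖(f z - 2 * m) - (f c - 2 * m)‖ := by rw [sub_sub_sub_cancel_right]
    _ ≤ ‖f z - 2 * m‖ + ‖f c - 2 * m‖ := norm_sub_le _ _
    _ ≤ Real.cosh (192 * ‖z - c‖ / (R - ‖z - c‖)) + 1 := add_le_add hbound hcenter

/-- The radius `2000` makes the bound `cosh (192 * 2π / (R - 2π))` smaller than `3`. -/
lemma apply_add_two_pi_I_ne_of_exp_ne_one {L : ℂ → ℂ} {s : ℂ} {n : ℕ} (hn : 2 ≤ n)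
    (hL : DifferentiableOn ℂ L (ball s 2000)) (hexp : ∀ w ∈ ball s 2000, exp (L w) ≠ 1)
    (hre : (L s).re = 0) : L (s + 2 * Real.pi * I) ≠ L s + n * (2 * Real.pi * I) := by
  intro hmono
  have hpi : (Real.pi : ℂ) * I ≠ 0 := by simp [Real.pi_ne_zero]
  have hpi4 := Real.pi_lt_four
  have hodd : ∀ w ∈ ball s 2000, ∀ j : ℤ, Odd j → L w / (Real.pi * I) - 1 ≠ j := by
    rintro w hw _ ⟨j, rfl⟩ hj
    refine hexp w hw (exp_eq_one_iff.2 ⟨j + 1, ?_⟩)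
    rw [sub_eq_iff_eq_add, div_eq_iff hpi] at hj
    rw [hj]
    push_cast
    ring
  have hreal : (L s / (Real.pi * I) - 1).im = 0 := by
    rw [sub_im, one_im, sub_zero, ← div_div, div_I, neg_im, mul_I_im, div_ofReal_re, hre, zero_div,
      neg_zero]
  have hnorm : ‖s + 2 * Real.pi * I - s‖ = 2 * Real.pi := by
    simp [abs_of_pos Real.pi_pos]
  have hbound := norm_sub_le_cosh_add_one_of_forall_ne_odd ((hL.div_const _).sub_const _) hodd hreal
    (mem_ball_iff_norm.2 (by linarith) : s + 2 * Real.pi * I ∈ ball s 2000)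
  have hdiff : L (s + 2 * Real.pi * I) / (Real.pi * I) - 1 - (L s / (Real.pi * I) - 1)
      = (2 * n : ℕ) := by
    rw [hmono]
    field_simp
    push_cast
    ring
  have hcosh : Real.cosh (192 * (2 * Real.pi) / (2000 - 2 * Real.pi)) < 3 := by
    refine lt_of_le_of_lt (Real.cosh_le_cosh.2 ?_) (?_ : Real.cosh 1 < 3)
    · have hden : 0 < 2000 - 2 * Real.pi := by linarith
      rw [abs_one, abs_of_nonneg (by positivity), div_le_one hden]
      linarith
    · refine (Real.cosh_le_exp_half_sq 1).trans_lt (lt_trans ?_ Real.exp_one_lt_three)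
      exact Real.exp_lt_exp.2 (by norm_num)
  rw [hdiff, hnorm, norm_natCast] at hbound
  have : (4 : ℝ) ≤ (2 * n : ℕ) := by exact_mod_cast (by omega : 4 ≤ 2 * n)
  linarith

lemma exists_differentiableOn_exp_eq_exp_pow_mul {g : ℂ → ℂ} (hg : DifferentiableOn ℂ g (ball 0 1))
    (hg0 : ∀ z ∈ ball 0 1, g z ≠ 0) (n : ℕ) :
    ∃ L : ℂ → ℂ, DifferentiableOn ℂ L {s | s.re < 0} ∧
      (∀ s, s.re < 0 → exp (L s) = exp s ^ n * g (exp s)) ∧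
      ∀ s, L (s + 2 * Real.pi * I) = L s + n * (2 * Real.pi * I) := by
  obtain ⟨l, hl, hlg⟩ :=
    exists_differentiableOn_exp_eq isOpen_ball (isSimplyConnected_ball 0 one_pos) hg hg0
  have hmaps : MapsTo exp {s | s.re < 0} (ball 0 1) := fun s hs => by
    rwa [mem_ball_zero_iff, norm_exp, Real.exp_lt_one_iff]
  refine ⟨fun s => n * s + l (exp s), ?_, fun s hs => ?_, fun s => ?_⟩
  · exact (differentiableOn_id.const_mul _).add
      (hl.comp differentiable_exp.differentiableOn hmaps)
  · rw [exp_add, exp_nat_mul, hlg _ (hmaps hs)]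
  · simp only [exp_periodic s]
    ring

lemma norm_ne_norm_pow_mul {u v : ℂ → ℂ} {n : ℕ} {z : ℂ} (hn : 2 ≤ n)
    (hu : DifferentiableOn ℂ u (ball 0 1)) (hv : DifferentiableOn ℂ v (ball 0 1))
    (hu0 : ∀ w ∈ ball 0 1, u w ≠ 0) (hv0 : ∀ w ∈ ball 0 1, v w ≠ 0)
    (huv : ∀ w ∈ ball 0 1, Real.exp (-4000) < ‖w‖ → u w ≠ w ^ n * v w)
    (hz : ‖z‖ = Real.exp (-2000)) : ‖u z‖ ≠ ‖z ^ n * v z‖ := by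
  intro hnorm
  obtain ⟨L, hL, hLexp, hmono⟩ := exists_differentiableOn_exp_eq_exp_pow_mul (hv.div hu hu0)
    (fun w hw => div_ne_zero (hv0 w hw) (hu0 w hw)) n
  have hz0 : z ≠ 0 := norm_pos_iff.1 (hz ▸ Real.exp_pos _)
  have hz1 : z ∈ ball 0 1 := by simp [hz]
  have hre : (log z).re = -2000 := by rw [log_re, hz, Real.log_exp]
  have hstrip : ∀ s ∈ ball (log z) 2000, -4000 < s.re ∧ s.re < 0 := fun s hs => by
    have := (abs_re_le_norm (s - log z)).trans_lt (mem_ball_iff_norm.1 hs)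
    rw [sub_re, hre, abs_lt] at this
    constructor <;> linarith
  refine apply_add_two_pi_I_ne_of_exp_ne_one hn (hL.mono fun s hs => (hstrip s hs).2)
    (fun s hs => ?_) ?_ (hmono (log z))
  · obtain ⟨hlow, hneg⟩ := hstrip s hs
    have hmem : exp s ∈ ball 0 1 := by rwa [mem_ball_zero_iff, norm_exp, Real.exp_lt_one_iff]
    rw [hLexp s hneg, Pi.div_apply, ← mul_div_assoc, Ne, div_eq_one_iff_eq (hu0 _ hmem)]
    exact (huv _ hmem (by rwa [norm_exp, Real.exp_lt_exp])).symm
  · rw [← Real.exp_eq_one_iff, ← norm_exp, hLexp _ (by linarith), exp_log hz0, Pi.div_apply,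
      ← mul_div_assoc, norm_div, hnorm, div_self]
    exact hnorm ▸ norm_ne_zero_iff.2 (hu0 z hz1)

lemma exists_mem_frontier_norm_le_norm {E F : Type*} [NormedAddCommGroup E] [NormedSpace ℂ E]
    [FiniteDimensional ℂ E] [Nontrivial E] [NormedAddCommGroup F] [NormedSpace ℂ F]
    {U : Set E} {f : E → ℂ} {g : E → F} {a : E} (hU : IsBounded U)
    (hf : DiffContOnCl ℂ f U) (hg : DiffContOnCl ℂ g U) (hf0 : ∀ z ∈ closure U, f z ≠ 0)
    (ha : a ∈ closure U) (hfg : ‖f a‖ ≤ ‖g a‖) : ∃ z ∈ frontier U, ‖f z‖ ≤ ‖g z‖ := by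
  obtain ⟨z, hz, hmax⟩ := exists_mem_frontier_isMaxOn_norm hU (closure_nonempty_iff.1 ⟨a, ha⟩)
    ((hf.inv hf0).smul hg)
  have hpos : ∀ w ∈ closure U, 0 < ‖f w‖ := fun w hw => norm_pos_iff.2 (hf0 w hw)
  have hle : ‖(f a)⁻¹ • g a‖ ≤ ‖(f z)⁻¹ • g z‖ := hmax ha
  rw [norm_smul, norm_smul, norm_inv, norm_inv] at hle
  have hone := ((one_le_inv_mul₀ (hpos a ha)).2 hfg).trans hle
  exact ⟨z, hz, (one_le_inv_mul₀ (hpos z hz.1)).1 hone⟩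

/-- The alternating sum over the rotations keeps only the Taylor coefficients of order `2`
modulo `4`, so the Schwarz lemma applies with a double zero at `0`. -/
lemma norm_alternating_sum_rotations_le {E : Type*} [NormedAddCommGroup E] [NormedSpace ℂ E]
    {f : ℂ → E} {r M : ℝ} {a : ℂ}
    (hf : DifferentiableOn ℂ f (ball 0 r)) (hM : ∀ z ∈ ball 0 r, ‖f z‖ ≤ M) (ha : a ∈ ball 0 r) :
    ‖f a - f (I * a) + f (-a) - f (-(I * a))‖ ≤ 4 * M * (‖a‖ / r) ^ 2 := by
  set g : ℂ → E := fun z => f z - f (I * z) + f (-z) - f (-(I * z)) with hg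
  have hr : 0 < r := nonempty_ball.1 ⟨a, ha⟩
  have hI : MapsTo (I * ·) (ball (0 : ℂ) r) (ball 0 r) := fun z hz => by simpa using hz
  have hneg : MapsTo (- ·) (ball (0 : ℂ) r) (ball 0 r) := fun z hz => by simpa using hz
  have hgd : DifferentiableOn ℂ g (ball 0 r) :=
    ((hf.sub (hf.comp (by fun_prop) hI)).add (hf.comp (by fun_prop) hneg)).sub
      (hf.comp (by fun_prop) (hneg.comp hI))
  have hg0 : g 0 = 0 := by simp [hg]
  have hmaps : MapsTo g (ball 0 r) (closedBall (g 0) (4 * M)) := fun z hz => by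
    rw [hg0, mem_closedBall_zero_iff]
    refine (norm_sub_le _ _).trans ?_
    linarith [norm_add_le (f z - f (I * z)) (f (-z)), norm_sub_le (f z) (f (I * z)), hM z hz,
      hM _ (hI hz), hM _ (hneg hz), hM _ (hneg (hI hz))]
  have hderiv : HasDerivAt g 0 0 := by
    have hf' : ∀ b : ℂ, HasDerivAt (fun z => f (b * z)) (b • deriv f 0) 0 := fun b => by
      have h0 : HasDerivAt f (deriv f 0) (b * 0) := by
        rw [mul_zero]
        exact (hf.differentiableAt (ball_mem_nhds _ hr)).hasDerivAt
      simpa using! h0.scomp (0 : ℂ) ((hasDerivAt_id (0 : ℂ)).const_mul b)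
    convert! (((hf' 1).sub (hf' I)).add (hf' (-1))).sub (hf' (-I)) using 1
    · ext z; simp [hg]
    · module
  have hlittle : (g · - g 0) =o[𝓝 0] fun z => ‖z - 0‖ ^ 1 := by
    simpa using (hasDerivAt_iff_isLittleO.1 hderiv).norm_right
  simpa [hg0, hg] using dist_le_mul_div_pow_of_mapsTo_ball_of_isLittleO hgd hmaps hlittle ha

lemma exists_mem_sphere_sq_le_norm {f : ℂ → ℂ} {a : ℂ} {r : ℝ}
    (hf : DiffContOnCl ℂ f (ball 0 r)) (ha : a ∈ ball 0 r) (ha0 : a ≠ 0)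
    (hroots : ∀ z, z ^ 4 = a ^ 4 → f z = z ^ 2) : ∃ z ∈ sphere 0 r, r ^ 2 ≤ ‖f z‖ := by
  have hr : 0 < r := nonempty_ball.1 ⟨a, ha⟩
  obtain ⟨z, hz, hmax⟩ := exists_mem_frontier_isMaxOn_norm isBounded_ball ⟨a, ha⟩ hf
  rw [frontier_ball _ hr.ne'] at hz
  refine ⟨z, hz, ?_⟩
  have hsum := norm_alternating_sum_rotations_le hf.differentiableOn
    (fun w hw => hmax (subset_closure hw)) ha
  rw [hroots a rfl, hroots (I * a) (by rw [mul_pow, I_pow_four, one_mul]),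
    hroots (-a) (by ring), hroots (-(I * a)) (by rw [neg_pow, mul_pow, I_pow_four]; norm_num),
    show a ^ 2 - (I * a) ^ 2 + (-a) ^ 2 - (-(I * a)) ^ 2 = 4 * a ^ 2 by
      linear_combination (-2 * a ^ 2) * I_sq, norm_mul, norm_pow, norm_ofNat] at hsum
  rw [Function.comp_apply, div_pow, ← mul_div_assoc, le_div_iff₀ (pow_pos hr 2)] at hsum
  exact le_of_mul_le_mul_left (by linarith) (by positivity : 0 < 4 * ‖a‖ ^ 2)

lemma exists_mem_sphere_norm_eq_norm_sq_mul {u v : ℂ → ℂ} {a : ℂ} {r : ℝ}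
    (hu : DiffContOnCl ℂ u (ball 0 r)) (hv : DiffContOnCl ℂ v (ball 0 r))
    (hu0 : ∀ z ∈ closedBall 0 r, u z ≠ 0) (hv0 : ∀ z ∈ closedBall 0 r, v z ≠ 0)
    (ha : a ∈ ball 0 r) (ha0 : a ≠ 0) (hroots : ∀ z, z ^ 4 = a ^ 4 → u z = z ^ 2 * v z) :
    ∃ z ∈ sphere 0 r, ‖u z‖ = ‖z ^ 2 * v z‖ := by
  have hr : 0 < r := nonempty_ball.1 ⟨a, ha⟩
  rw [← closure_ball 0 hr.ne'] at hu0 hv0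
  have hv' : DiffContOnCl ℂ (fun z => z ^ 2 * v z) (ball 0 r) :=
    ((differentiable_id.pow 2).diffContOnCl).smul hv
  obtain ⟨z₁, hz₁, hle₁⟩ := exists_mem_frontier_norm_le_norm isBounded_ball hu hv' hu0
    (subset_closure ha) (hroots a rfl ▸ le_rfl)
  obtain ⟨z₂, hz₂, hle₂⟩ := exists_mem_sphere_sq_le_norm ((hv.inv hv0).smul hu) ha ha0
    fun z hz => by
      have hza : ‖z‖ = ‖a‖ := (pow_left_inj₀ (norm_nonneg _) (norm_nonneg _) four_ne_zero).1
        (by rw [← norm_pow, hz, norm_pow])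
      have hz0 := hv0 z (subset_closure (by rwa [mem_ball_zero_iff, hza, ← mem_ball_zero_iff]))
      simp [hroots z hz, mul_comm, hz0]
  rw [frontier_ball _ hr.ne'] at hz₁
  have hsphere : sphere 0 r ⊆ closure (ball (0 : ℂ) r) := by
    rw [closure_ball _ hr.ne']
    exact sphere_subset_closedBall
  refine (isPreconnected_sphere (by simp [rank_real_complex]) 0 r).intermediate_value₂ hz₁ hz₂
    (hu.continuousOn.mono hsphere).norm (hv'.continuousOn.mono hsphere).norm hle₁ ?_
  have hz₂v : 0 < ‖v z₂‖ := norm_pos_iff.2 (hv0 z₂ (hsphere hz₂))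
  rw [Pi.inv_apply, norm_smul, norm_inv, ← mem_sphere_zero_iff_norm.1 hz₂,
    le_inv_mul_iff₀ hz₂v] at hle₂
  rwa [norm_mul, norm_pow, mul_comm]

theorem no_jointly_invertible_h_general {c : ℂ} (hc : Real.exp 16000 < ‖c‖) :
    ¬ ∃ h : ℂ → ℂ, DifferentiableOn ℂ h (ball 0 1) ∧
      (∀ z ∈ ball (0 : ℂ) 1, 1 + h z * z ^ 2 ≠ 0) ∧
      ∀ z ∈ ball (0 : ℂ) 1, c * z ^ 2 + h z ≠ 0 := by
  rintro ⟨h, hh, hu0, hv0⟩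
  have hc0 : c ≠ 0 := norm_pos_iff.1 ((Real.exp_pos _).trans hc)
  have hu : DifferentiableOn ℂ (fun z => 1 + h z * z ^ 2) (ball 0 1) := by fun_prop
  have hv : DifferentiableOn ℂ (fun z => c * z ^ 2 + h z) (ball 0 1) := by fun_prop
  obtain ⟨a, ha⟩ := IsAlgClosed.exists_pow_nat_eq c⁻¹ (n := 4) (by norm_num)
  have ha0 : a ≠ 0 := by rintro rfl; simp [hc0.symm] at ha
  have har : a ∈ ball 0 (Real.exp (-2000)) := by
    rw [mem_ball_zero_iff]
    refine lt_of_pow_lt_pow_left₀ 4 (Real.exp_pos _).le ?_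
    rw [← norm_pow, ha, norm_inv, ← Real.exp_nat_mul]
    refine inv_lt_of_inv_lt₀ (Real.exp_pos _) ?_
    rw [← Real.exp_neg]
    exact (Real.exp_le_exp.2 (by norm_num)).trans_lt hc
  have hsub : closedBall (0 : ℂ) (Real.exp (-2000)) ⊆ ball 0 1 :=
    closedBall_subset_ball (by simp)
  obtain ⟨z, hz, hnorm⟩ := exists_mem_sphere_norm_eq_norm_sq_mul
    ((hu.mono hsub).diffContOnCl_ball subset_rfl) ((hv.mono hsub).diffContOnCl_ball subset_rfl)
    (fun z hz => hu0 z (hsub hz)) (fun z hz => hv0 z (hsub hz)) har ha0 fun z hz => by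
      have : c * z ^ 4 = 1 := by rw [hz, ha, mul_inv_cancel₀ hc0]
      linear_combination -this
  refine norm_ne_norm_pow_mul le_rfl hu hv hu0 hv0 (fun w _ hlow heq => ?_)
    (mem_sphere_zero_iff_norm.1 hz) hnorm
  have hw4 : c * w ^ 4 = 1 := by linear_combination -heq
  have hlt : 1 < ‖c * w ^ 4‖ := calc
    1 = Real.exp 16000 * Real.exp (-4000) ^ 4 := by
      rw [← Real.exp_nat_mul, ← Real.exp_add]
      norm_num
    _ < ‖c * w ^ 4‖ := by
      rw [norm_mul, norm_pow]
      gcongr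
  rw [hw4, norm_one] at hlt
  exact hlt.false

theorem no_jointly_invertible_h :
    ∃ n : ℕ, ¬ ∃ h : ℂ → ℂ, IsRDisc h ∧
      IsRDiscUnit (fun z => 1 + h z * z ^ 2) ∧
      IsRDiscUnit (fun z => (n : ℂ) ^ 2 * z ^ 2 + h z) := by
  obtain ⟨n, hn⟩ := exists_nat_gt (Real.exp 8000)
  have hn2 : Real.exp 16000 < ‖(n : ℂ) ^ 2‖ := by
    rw [norm_pow, norm_natCast, show (16000 : ℝ) = (2 : ℕ) * 8000 by norm_num, Real.exp_nat_mul]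
    gcongr
  refine ⟨n, fun ⟨h, ⟨_, hh, _⟩, ⟨_, hu⟩, ⟨_, hv⟩⟩ => no_jointly_invertible_h_general hn2
    ⟨h, hh, fun z hz => hu z (ball_subset_closedBall hz), fun z hz =>
      hv z (ball_subset_closedBall hz)⟩⟩
end

section
/- There exists an invertible pair (f,g) in the real disc algebra A_ℝ(D) such that f is positive at every real zero of g, g is positive at every real zero of f, and yet whenever α, β ∈ A_ℝ(D) satisfy αf + βg = 1, at least one of α, β is not a unit of A_ℝ(D). -/
open Complex Metric ComplexConjugate

/-!
Take `f = z²` and `g = (z - a)²` with `a > 0` small. If `α f + β g = 1` on the open disc with `α`,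
`β` free of zeros, write `α = A²` and `β = B²`; then `(z A)² + ((z - a) B)² = 1`, so
`z A = cos w` and `(z - a) B = sin w` for a holomorphic `w`. Since `cos w` vanishes only at `0` and
`sin w` vanishes at `a`, the function `s = (w - w 0) / π` takes no nonzero integer value, while
`s 0 = 0` and `s a` is half an odd integer. A theorem of Schottky type says that such an `s` is
small near `0`, uniformly in `s`, which is absurd for small `a`. To prove it, write `s = cos u`: the
preimage under `cos` of the nonzero integers is a `4`-net in the plane, which `u` omits, so Bloch's
theorem bounds `u'`.
-/

section

open Set

variable {f : ℂ → ℂ} {c : ℂ} {R : ℝ}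

/-! ### Logarithms and trigonometric substitutions on a disc -/

theorem exists_differentiableOn_eqOn_exp_ball (hf : DifferentiableOn ℂ f (ball c R))
    (hf₀ : ∀ z ∈ ball c R, f z ≠ 0) :
    ∃ L : ℂ → ℂ, DifferentiableOn ℂ L (ball c R) ∧ EqOn f (fun z => exp (L z)) (ball c R) := by
  obtain ⟨L, hL⟩ : IsExactOn (logDeriv f) (ball c R) :=
    ((hf.deriv isOpen_ball).div hf hf₀).isExactOn_ball
  have hLd : DifferentiableOn ℂ L (ball c R) := fun z hz =>
    (hL z hz).differentiableAt.differentiableWithinAt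
  have hlog : EqOn (logDeriv f) (logDeriv fun z => exp (L z)) (ball c R) := fun z hz => by
    rw [logDeriv_apply (fun z => exp (L z)), (hL z hz).cexp.deriv,
      mul_div_cancel_left₀ _ (exp_ne_zero _)]
  obtain ⟨b, hb, hfb⟩ := (logDeriv_eqOn_iff hf hLd.cexp isOpen_ball
    (convex_ball c R).isPreconnected (fun _ _ => exp_ne_zero _) hf₀).1 hlog
  refine ⟨fun z => log b + L z, hLd.const_add _, fun z hz => ?_⟩
  simpa only [Pi.smul_apply, smul_eq_mul, exp_add, exp_log hb] using hfb hz

theorem exists_differentiableOn_eqOn_sq_ball (hf : DifferentiableOn ℂ f (ball c R))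
    (hf₀ : ∀ z ∈ ball c R, f z ≠ 0) :
    ∃ A : ℂ → ℂ, DifferentiableOn ℂ A (ball c R) ∧ EqOn f (fun z => A z ^ 2) (ball c R) := by
  obtain ⟨L, hL, hfL⟩ := exists_differentiableOn_eqOn_exp_ball hf hf₀
  refine ⟨fun z => exp (L z / 2), (hL.div_const 2).cexp, fun z hz => ?_⟩
  simp only [hfL hz, ← exp_nat_mul, Nat.cast_ofNat, mul_div_cancel₀ (L z) two_ne_zero]

theorem exists_differentiableOn_eqOn_cos_sin_ball {P Q : ℂ → ℂ}
    (hP : DifferentiableOn ℂ P (ball c R)) (hQ : DifferentiableOn ℂ Q (ball c R))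
    (hPQ : ∀ z ∈ ball c R, P z ^ 2 + Q z ^ 2 = 1) :
    ∃ w : ℂ → ℂ, DifferentiableOn ℂ w (ball c R) ∧
      EqOn P (fun z => cos (w z)) (ball c R) ∧ EqOn Q (fun z => sin (w z)) (ball c R) := by
  have hmul : ∀ z ∈ ball c R, (P z + Q z * I) * (P z - Q z * I) = 1 := fun z hz => by
    linear_combination hPQ z hz - Q z ^ 2 * I_sq
  obtain ⟨L, hL, hexp⟩ := exists_differentiableOn_eqOn_exp_ball (hP.add (hQ.mul_const I))
    fun z hz => left_ne_zero_of_mul_eq_one (hmul z hz)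
  refine ⟨fun z => -(L z * I), (hL.mul_const I).neg, ?_⟩
  have hpos : ∀ z ∈ ball c R, exp (-(L z * I) * I) = P z + Q z * I := fun z hz => by
    rw [show -(L z * I) * I = L z by linear_combination -L z * I_sq]
    exact (hexp hz).symm
  have hneg : ∀ z ∈ ball c R, exp (-(-(L z * I)) * I) = P z - Q z * I := fun z hz => by
    rw [neg_mul, exp_neg, hpos z hz]
    exact inv_eq_of_mul_eq_one_right (hmul z hz)
  constructor <;> intro z hz
  · simp only [cos, hpos z hz, hneg z hz]
    ring
  · simp only [sin, hpos z hz, hneg z hz]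
    linear_combination Q z * I_sq

theorem exists_differentiableOn_eqOn_cos_ball (hf : DifferentiableOn ℂ f (ball c R))
    (hf₁ : ∀ z ∈ ball c R, f z ^ 2 ≠ 1) :
    ∃ u : ℂ → ℂ, DifferentiableOn ℂ u (ball c R) ∧ EqOn f (fun z => cos (u z)) (ball c R) := by
  obtain ⟨Q, hQ, hfQ⟩ := exists_differentiableOn_eqOn_sq_ball ((hf.pow 2).const_sub 1)
    fun z hz => sub_ne_zero.2 (hf₁ z hz).symm
  obtain ⟨u, hu, hfu, -⟩ := exists_differentiableOn_eqOn_cos_sin_ball hf hQ fun z hz =>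
    (add_eq_of_eq_sub' (hfQ hz).symm)
  exact ⟨u, hu, hfu⟩

/-! ### Bloch's theorem -/

theorem ball_subset_image_closedBall_of_norm_deriv_sub_le {r : ℝ} (hr : 0 < r)
    (hf : ∀ z ∈ closedBall c r, DifferentiableAt ℂ f z)
    (hderiv : ∀ z ∈ closedBall c r, ‖deriv f z - deriv f c‖ ≤ ‖deriv f c‖ / 2) :
    ball (f c) (r * ‖deriv f c‖ / 4) ⊆ f '' closedBall c r := by
  rcases eq_or_ne (deriv f c) 0 with hc | hc
  · simp [hc]
  have hmem : c ∈ closedBall c r := mem_closedBall_self hr.le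
  have hdiff : DiffContOnCl ℂ f (ball c r) := DifferentiableOn.diffContOnCl fun z hz =>
    (hf z (closure_ball_subset_closedBall hz)).differentiableWithinAt
  have hsub : ∀ z ∈ closedBall c r, HasDerivWithinAt (fun y => f y - deriv f c * y)
      (deriv f z - deriv f c) (closedBall c r) z := fun z hz =>
    ((hf z hz).hasDerivAt.sub (hasDerivAt_const_mul (deriv f c))).hasDerivWithinAt
  have hlin : ∀ z ∈ closedBall c r,
      ‖f z - f c - deriv f c * (z - c)‖ ≤ ‖deriv f c‖ / 2 * ‖z - c‖ := fun z hz => by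
    rw [show f z - f c - deriv f c * (z - c) = f z - deriv f c * z - (f c - deriv f c * c) by ring]
    exact (convex_closedBall c r).norm_image_sub_le_of_norm_hasDerivWithin_le hsub hderiv hmem hz
  have hsphere : ∀ z ∈ sphere c r, r * ‖deriv f c‖ / 2 ≤ ‖f z - f c‖ := fun z hz => by
    have hdom := hlin z (sphere_subset_closedBall hz)
    have htri := norm_sub_le (f z - f c) (f z - f c - deriv f c * (z - c))
    rw [sub_sub_cancel, norm_mul] at htri
    rw [mem_sphere_iff_norm.1 hz] at hdom htri
    linarith
  have hne : ∃ᶠ z in nhds c, f z ≠ f c :=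
    ((hf c hmem).hasDerivAt.eventually_ne hc).frequently.filter_mono nhdsWithin_le_nhds
  convert hdiff.ball_subset_image_closedBall hr hsphere hne using 2
  ring

theorem ball_subset_image_ball_of_norm_deriv_le_two_mul (hR : 0 < R)
    (hf : DifferentiableOn ℂ f (ball c R))
    (hderiv : ∀ z ∈ ball c R, ‖deriv f z‖ ≤ 2 * ‖deriv f c‖) :
    ball (f c) (R * ‖deriv f c‖ / 24) ⊆ f '' ball c R := by
  have hsub : closedBall c (R / 6) ⊆ ball c R := closedBall_subset_ball (by linarith)
  have hmaps : MapsTo (deriv f) (ball c R) (closedBall (deriv f c) (3 * ‖deriv f c‖)) :=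
    fun z hz => mem_closedBall_iff_norm.2 <| by
      linarith [norm_sub_le (deriv f z) (deriv f c), hderiv z hz]
  have hschwarz : ∀ z ∈ closedBall c (R / 6),
      ‖deriv f z - deriv f c‖ ≤ ‖deriv f c‖ / 2 := fun z hz => calc
    ‖deriv f z - deriv f c‖ ≤ 3 * ‖deriv f c‖ / R * ‖z - c‖ := by
      simpa only [dist_eq_norm] using
        dist_le_div_mul_dist_of_mapsTo_ball (hf.deriv isOpen_ball) hmaps (hsub hz)
    _ ≤ 3 * ‖deriv f c‖ / R * (R / 6) := by
      gcongr
      exact mem_closedBall_iff_norm.1 hz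
    _ = ‖deriv f c‖ / 2 := by
      field_simp
      ring
  have himage := ball_subset_image_closedBall_of_norm_deriv_sub_le (by positivity)
    (fun z hz => hf.differentiableAt (isOpen_ball.mem_nhds (hsub hz))) hschwarz
  rw [show R * ‖deriv f c‖ / 24 = R / 6 * ‖deriv f c‖ / 4 by ring]
  exact himage.trans (image_mono hsub)

/-- **Bloch's theorem**, with a non-optimal constant. -/
theorem exists_ball_subset_image_ball (hR : 0 < R) (hf : DifferentiableOn ℂ f (ball c R)) :
    ∃ ξ : ℂ, ball ξ (R * ‖deriv f c‖ / 96) ⊆ f '' ball c R := by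
  have hK : closedBall c (3 * R / 4) ⊆ ball c R := closedBall_subset_ball (by linarith)
  have : CompleteSpace (closedBall c (3 * R / 4)) := isClosed_closedBall.completeSpace_coe
  have hcont : Continuous fun z : closedBall c (3 * R / 4) => ‖deriv f z‖ :=
    (((hf.deriv isOpen_ball).continuousOn.mono hK).norm).domRestrict
  obtain ⟨r, hr, ⟨p, _⟩, hrR, hpc, hle, hdouble⟩ := hofer
    (⟨c, mem_closedBall_self (by positivity)⟩ : closedBall c (3 * R / 4)) (R / 4) (by positivity)
    hcont fun _ => norm_nonneg _
  simp only [Subtype.dist_eq, Subtype.forall] at hpc hle hdouble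
  have hsub : ball p r ⊆ closedBall c (3 * R / 4) := fun z hz => by
    rw [mem_closedBall]
    linarith [dist_triangle z p c, mem_ball.1 hz]
  refine ⟨f p, (ball_subset_ball ?_).trans <|
    (ball_subset_image_ball_of_norm_deriv_le_two_mul hr (hf.mono (hsub.trans hK)) fun z hz =>
      hdouble z (hsub hz) (mem_ball'.1 hz).le).trans (image_mono (hsub.trans hK))⟩
  linarith

theorem norm_deriv_mul_le_of_forall_exists_notMem_image_s5 {d : ℝ} (hR : 0 < R)
    (hf : DifferentiableOn ℂ f (ball c R)) (hd : ∀ ξ, ∃ t ∈ ball ξ d, t ∉ f '' ball c R) :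
    R * ‖deriv f c‖ ≤ 96 * d := by
  obtain ⟨ξ, hξ⟩ := exists_ball_subset_image_ball hR hf
  obtain ⟨t, ht, htf⟩ := hd ξ
  by_contra! hlt
  exact htf (hξ (ball_subset_ball (by linarith) ht))

theorem norm_sub_le_of_forall_exists_notMem_image {d : ℝ} (hR : 0 < R)
    (hf : DifferentiableOn ℂ f (ball c R)) (hd : ∀ ξ, ∃ t ∈ ball ξ d, t ∉ f '' ball c R)
    {z : ℂ} (hz : z ∈ ball c (R / 2)) :
    ‖f z - f c‖ ≤ 192 * d / R * ‖z - c‖ := by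
  have hhalf : ∀ x ∈ ball c (R / 2), ball x (R / 2) ⊆ ball c R := fun x hx =>
    ball_subset_ball' (by linarith [mem_ball.1 hx])
  refine (convex_ball c (R / 2)).norm_image_sub_le_of_norm_deriv_le (fun x hx => ?_)
    (fun x hx => ?_) (mem_ball_self (by positivity)) hz
  · exact hf.differentiableAt (isOpen_ball.mem_nhds (hhalf x hx (mem_ball_self (by positivity))))
  · have hx' := norm_deriv_mul_le_of_forall_exists_notMem_image_s5 (half_pos hR)
      (hf.mono (hhalf x hx)) fun ξ =>
        (hd ξ).imp fun t ht => ⟨ht.1, fun h => ht.2 (image_mono (hhalf x hx) h)⟩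
    rw [le_div_iff₀ hR]
    linarith

/-! ### A Schottky-type theorem -/

theorem exists_cosh_eq_intCast (y : ℝ) :
    ∃ τ : ℝ, |τ - y| ≤ 2 ∧ ∃ k : ℤ, k ≠ 0 ∧ Real.cosh τ = k := by
  wlog hy : 0 ≤ y generalizing y
  · obtain ⟨τ, hτ, hk⟩ := this (-y) (by linarith)
    exact ⟨-τ, by rwa [← abs_neg, neg_sub, sub_neg_eq_add, add_comm, ← sub_neg_eq_add],
      by rwa [Real.cosh_neg]⟩
  have hgap : Real.cosh y + 1 ≤ Real.cosh (y + 2) := by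
    have hsinh : 2 ≤ Real.sinh 2 := Real.self_le_sinh_iff.2 zero_le_two
    have hcosh : 2 ≤ Real.cosh 2 := by nlinarith [Real.cosh_sq 2, Real.cosh_pos 2]
    rw [Real.cosh_add]
    nlinarith [Real.one_le_cosh y, Real.sinh_nonneg_iff.2 hy]
  obtain ⟨τ, hτ, hk⟩ := intermediate_value_Icc (by linarith : y ≤ y + 2)
    Real.continuous_cosh.continuousOn
    ⟨Int.le_ceil (Real.cosh y), (Int.ceil_lt_add_one _).le.trans hgap⟩
  exact ⟨τ, abs_le.2 ⟨by linarith [hτ.1], by linarith [hτ.2]⟩, _,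
    (Int.ceil_pos.2 (Real.cosh_pos y)).ne', hk⟩

theorem exists_mem_ball_four_cos_eq_intCast (ξ : ℂ) :
    ∃ t ∈ ball ξ 4, ∃ k : ℤ, k ≠ 0 ∧ cos t = k := by
  obtain ⟨τ, hτ, k, hk, hcosh⟩ := exists_cosh_eq_intCast ξ.im
  set n : ℤ := round (ξ.re / Real.pi)
  have hre : |n * Real.pi - ξ.re| < 2 := calc
    |n * Real.pi - ξ.re| = |ξ.re / Real.pi - n| * Real.pi := by
      rw [← abs_of_pos Real.pi_pos, ← abs_mul, abs_of_pos Real.pi_pos, abs_sub_comm, sub_mul,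
        div_mul_cancel₀ _ Real.pi_ne_zero]
    _ ≤ 1 / 2 * Real.pi := by
      gcongr
      exact abs_sub_round _
    _ < 2 := by linarith [Real.pi_lt_four]
  refine ⟨τ * I + n * Real.pi, ?_, n.negOnePow * k, by simp [hk], ?_⟩
  · rw [mem_ball_iff_norm]
    calc ‖τ * I + n * Real.pi - ξ‖
        ≤ |(τ * I + n * Real.pi - ξ).re| + |(τ * I + n * Real.pi - ξ).im| :=
          norm_le_abs_re_add_abs_im _
      _ = |n * Real.pi - ξ.re| + |τ - ξ.im| := by simp
      _ < 4 := by linarith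
  · rw [cos_antiperiodic.add_int_mul_eq, cos_mul_I, ← ofReal_cosh, hcosh]
    norm_cast

theorem norm_cos_eq_norm_sin_sub_of_cos_eq_zero {x : ℂ} (hx : cos x = 0) (y : ℂ) :
    ‖cos y‖ = ‖sin (y - x)‖ := by
  have hsin : ‖sin x‖ = 1 := by
    rcases cos_eq_zero_iff_sin_eq.1 hx with h | h <;> simp [h]
  rw [← add_sub_cancel x y, cos_add, hx, add_sub_cancel_left]
  simp [hsin]

theorem exists_forall_norm_lt_of_forall_ne_intCast {ε : ℝ} (hε : 0 < ε) :
    ∃ δ ∈ Ioo (0 : ℝ) 1, ∀ {s : ℂ → ℂ} {c : ℂ} {R : ℝ}, DifferentiableOn ℂ s (ball c R) →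
      (∀ z ∈ ball c R, ∀ k : ℤ, k ≠ 0 → s z ≠ k) → s c = 0 →
      ∀ z ∈ ball c (δ * R), ‖s z‖ < ε := by
  obtain ⟨η, hη, hsin⟩ := Metric.continuousAt_iff.1 (continuous_sin.continuousAt (x := 0)) ε hε
  simp only [sin_zero, dist_zero_right] at hsin
  have hδ₀ : 0 < min (1 / 2) (η / 768) := by positivity
  refine ⟨min (1 / 2) (η / 768), ⟨hδ₀, (min_le_left _ _).trans_lt one_half_lt_one⟩,
    fun {s c R} hs hint hc z hz => ?_⟩
  have hR : 0 < R := pos_of_mul_pos_right (pos_of_mem_ball hz) hδ₀.le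
  obtain ⟨u, hu, hsu⟩ := exists_differentiableOn_eqOn_cos_ball hs fun x hx h => by
    rcases sq_eq_one_iff.1 h with h | h
    · exact hint x hx 1 one_ne_zero (by simpa using h)
    · exact hint x hx (-1) (by norm_num) (by simpa using h)
  have hnet : ∀ ξ, ∃ t ∈ ball ξ 4, t ∉ u '' ball c R := fun ξ => by
    obtain ⟨t, ht, k, hk, hcos⟩ := exists_mem_ball_four_cos_eq_intCast ξ
    refine ⟨t, ht, ?_⟩
    rintro ⟨x, hx, rfl⟩
    exact hint x hx k hk ((hsu hx).trans hcos)
  have hzR : z ∈ ball c (R / 2) := ball_subset_ball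
    (by nlinarith [min_le_left (1 / 2) (η / 768)]) hz
  have hsmall : ‖u z - u c‖ < η := calc
    ‖u z - u c‖ ≤ 192 * 4 / R * ‖z - c‖ :=
      norm_sub_le_of_forall_exists_notMem_image hR hu hnet hzR
    _ < 192 * 4 / R * (η / 768 * R) := by
      gcongr
      exact (mem_ball_iff_norm.1 hz).trans_le (by gcongr; exact min_le_right _ _)
    _ = η := by
      field_simp
      norm_num
  have hcos : cos (u c) = 0 := (hsu (mem_ball_self hR)).symm.trans hc
  rw [hsu (ball_subset_ball (by linarith) hzR), norm_cos_eq_norm_sin_sub_of_cos_eq_zero hcos]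
  exact hsin hsmall

/-! ### Bézout identities between squares -/

theorem exists_forall_ne_intCast_of_sq_bezout {p q α β : ℂ → ℂ} {a : ℂ}
    (hp : DifferentiableOn ℂ p (ball c R)) (hq : DifferentiableOn ℂ q (ball c R))
    (hα : DifferentiableOn ℂ α (ball c R)) (hβ : DifferentiableOn ℂ β (ball c R))
    (hα₀ : ∀ z ∈ ball c R, α z ≠ 0) (hβ₀ : ∀ z ∈ ball c R, β z ≠ 0)
    (hαβ : ∀ z ∈ ball c R, α z * p z ^ 2 + β z * q z ^ 2 = 1)
    (hpc : ∀ z ∈ ball c R, p z = 0 ↔ z = c) (ha : a ∈ ball c R) (hqa : q a = 0) :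
    ∃ s : ℂ → ℂ, DifferentiableOn ℂ s (ball c R) ∧
      (∀ z ∈ ball c R, ∀ k : ℤ, k ≠ 0 → s z ≠ k) ∧ s c = 0 ∧ ∃ n : ℤ, s a = n - 1 / 2 := by
  obtain ⟨A, hA, hαA⟩ := exists_differentiableOn_eqOn_sq_ball hα hα₀
  obtain ⟨B, hB, hβB⟩ := exists_differentiableOn_eqOn_sq_ball hβ hβ₀
  obtain ⟨w, hw, hcos, hsin⟩ := exists_differentiableOn_eqOn_cos_sin_ball (hp.mul hA) (hq.mul hB)
    fun z hz => by
      rw [← hαβ z hz, hαA hz, hβB hz]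
      simp only [Pi.mul_apply]
      ring
  have hπ : (Real.pi : ℂ) ≠ 0 := ofReal_ne_zero.2 Real.pi_ne_zero
  have hcc : c ∈ ball c R := mem_ball_self (pos_of_mem_ball ha)
  have hcos_iff : ∀ z ∈ ball c R, cos (w z) = 0 ↔ z = c := fun z hz => by
    have hAz : A z ≠ 0 := by simpa [hαA hz] using hα₀ z hz
    simpa [hAz, hpc z hz] using (congrArg (· = 0) (hcos hz)).symm.to_iff
  obtain ⟨k, hk⟩ := cos_eq_zero_iff.1 ((hcos_iff c hcc).2 rfl)
  obtain ⟨n, hn⟩ := sin_eq_zero_iff.1 ((hsin ha).symm.trans (by simp [hqa]))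
  refine ⟨fun z => (w z - w c) / Real.pi, (hw.sub_const _).div_const _, ?_, by simp, n - k, ?_⟩
  · intro z hz j hj hzj
    have hzc : z = c := (hcos_iff z hz).1 <| cos_eq_zero_iff.2 ⟨k + j, by
      rw [div_eq_iff hπ, hk] at hzj
      push_cast
      linear_combination hzj⟩
    simp only [hzc, sub_self, zero_div] at hzj
    exact hj (by exact_mod_cast hzj.symm)
  · simp only [hn, hk]
    push_cast
    field_simp
    ring

theorem half_le_norm_intCast_sub_half (n : ℤ) : 1 / 2 ≤ ‖(n - 1 / 2 : ℂ)‖ := by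
  have hodd : (1 : ℝ) ≤ |((2 * n - 1 : ℤ) : ℝ)| := by
    exact_mod_cast Int.one_le_abs (by lia : 2 * n - 1 ≠ 0)
  rw [show (n - 1 / 2 : ℂ) = (2 * n - 1 : ℤ) / 2 by push_cast; ring, norm_div, norm_intCast,
    norm_ofNat]
  gcongr

theorem exists_forall_exists_zero_of_sq_bezout :
    ∃ δ ∈ Ioo (0 : ℝ) 1, ∀ {p q α β : ℂ → ℂ} {c a : ℂ} {R : ℝ},
      DifferentiableOn ℂ p (ball c R) → DifferentiableOn ℂ q (ball c R) →
      DifferentiableOn ℂ α (ball c R) → DifferentiableOn ℂ β (ball c R) →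
      (∀ z ∈ ball c R, α z * p z ^ 2 + β z * q z ^ 2 = 1) →
      (∀ z ∈ ball c R, p z = 0 ↔ z = c) → a ∈ ball c (δ * R) → q a = 0 →
      (∃ z ∈ ball c R, α z = 0) ∨ ∃ z ∈ ball c R, β z = 0 := by
  obtain ⟨δ, hδ, hsmall⟩ := exists_forall_norm_lt_of_forall_ne_intCast (one_half_pos (α := ℝ))
  refine ⟨δ, hδ, fun {p q α β c a R} hp hq hα hβ hαβ hpc ha hqa => ?_⟩
  by_contra! ⟨hα₀, hβ₀⟩
  have hR : 0 < R := pos_of_mul_pos_right (pos_of_mem_ball ha) hδ.1.le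
  have haR : a ∈ ball c R := ball_subset_ball (mul_le_of_le_one_left hR.le hδ.2.le) ha
  obtain ⟨s, hs, hint, hsc, n, hn⟩ :=
    exists_forall_ne_intCast_of_sq_bezout hp hq hα hβ hα₀ hβ₀ hαβ hpc haR hqa
  exact (half_le_norm_intCast_sub_half n).not_gt (hn ▸ hsmall hs hint hsc a ha)

/-! ### The real disc algebra -/

theorem IsRDisc.of_differentiable (hf : Differentiable ℂ f) (hconj : ∀ z, f z = conj (f (conj z))) :
    IsRDisc f :=
  ⟨hf.continuous.continuousOn, hf.differentiableOn, fun z _ => hconj z⟩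

theorem bezoutPair_sq_sub_sq {a : ℝ} (ha : a ≠ 0) :
    BezoutPair (fun z => z ^ 2) fun z => (z - a) ^ 2 := by
  have ha' : (a : ℂ) ≠ 0 := ofReal_ne_zero.2 ha
  refine ⟨fun z => (3 * a - 2 * z) / a ^ 3, fun z => (a + 2 * z) / a ^ 3,
    .of_differentiable (by fun_prop) (by simp [conj_ofNat]),
    .of_differentiable (by fun_prop) (by simp [conj_ofNat]), fun z _ => ?_⟩
  field_simp
  ring

end

theorem failure_of_total_reducibility_general :
    ∃ f g : ℂ → ℂ, IsRDisc f ∧ IsRDisc g ∧ BezoutPair f g ∧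
      (∀ x ∈ Set.Icc (-1 : ℝ) 1, g (x : ℂ) = 0 → 0 < (f (x : ℂ)).re) ∧
      (∀ x ∈ Set.Icc (-1 : ℝ) 1, f (x : ℂ) = 0 → 0 < (g (x : ℂ)).re) ∧
      ∀ α β : ℂ → ℂ, DifferentiableOn ℂ α (ball 0 1) → DifferentiableOn ℂ β (ball 0 1) →
        (∀ z ∈ ball (0 : ℂ) 1, α z * f z + β z * g z = 1) →
        (∃ z ∈ ball (0 : ℂ) 1, α z = 0) ∨ ∃ z ∈ ball (0 : ℂ) 1, β z = 0 := by
  obtain ⟨δ, hδ, hzero⟩ := exists_forall_exists_zero_of_sq_bezout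
  obtain ⟨a, ha₀, ha⟩ := exists_between hδ.1
  have hmem : (a : ℂ) ∈ ball 0 (δ * 1) := by simpa [abs_of_pos ha₀] using ha
  refine ⟨fun z => z ^ 2, fun z => (z - a) ^ 2, .of_differentiable (by fun_prop) (by simp),
    .of_differentiable (by fun_prop) (by simp), bezoutPair_sq_sub_sq ha₀.ne', ?_, ?_, ?_⟩
  · intro x _ hx
    obtain rfl : x = a := by simpa [sub_eq_zero] using hx
    simpa [← ofReal_pow] using pow_pos ha₀ 2
  · intro x _ hx
    obtain rfl : x = 0 := by simpa using hx
    simpa [← ofReal_pow] using pow_pos ha₀ 2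
  · intro α β hα hβ hαβ
    exact hzero differentiableOn_id (differentiableOn_id.sub_const _) hα hβ hαβ (fun _ _ => Iff.rfl)
      hmem (sub_self _)

theorem failure_of_total_reducibility :
    ∃ f g : ℂ → ℂ, IsRDisc f ∧ IsRDisc g ∧ BezoutPair f g ∧
      (∀ x ∈ Set.Icc (-1 : ℝ) 1, g (x : ℂ) = 0 → 0 < (f (x : ℂ)).re) ∧
      (∀ x ∈ Set.Icc (-1 : ℝ) 1, f (x : ℂ) = 0 → 0 < (g (x : ℂ)).re) ∧
      ∀ α β : ℂ → ℂ, IsRDisc α → IsRDisc β →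
        (∀ z ∈ closedBall (0 : ℂ) 1, α z * f z + β z * g z = 1) →
        ¬ IsRDiscUnit α ∨ ¬ IsRDiscUnit β := by
  obtain ⟨f, g, hf, hg, hfg, hpos_f, hpos_g, hzero⟩ := failure_of_total_reducibility_general
  refine ⟨f, g, hf, hg, hfg, hpos_f, hpos_g, fun α β hα hβ hαβ => ?_⟩
  exact (hzero α β hα.2.1 hβ.2.1 fun z hz => hαβ z (ball_subset_closedBall hz)).imp
    (fun ⟨z, hz, hz₀⟩ hunit => hunit.2 z (ball_subset_closedBall hz) hz₀)
    fun ⟨z, hz, hz₀⟩ hunit => hunit.2 z (ball_subset_closedBall hz) hz₀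
end
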